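/- Assume the stated hypotheses on Ω and u. Then for every ε > 0 there exists a constant C > 0 (depending on ε, Ω, n, p and on u) such that |∇u(x,t)| ≤ (1+ε) d_p δ(x)^{−β} + C and u(x,t) ≤ (1+ε) c_p δ(x)^{1−β} + C δ(x) for all (x,t) ∈ Ω × [0,T]. -/

import Mathlib

open Set Metric Filter RealInnerProductSpace

noncomputable section

set_option linter.unusedVariables false

/-- A set `Ω ⊆ ℝⁿ` has boundary of class `C²`: near each boundary point, `Ω` is the strict
sublevel set of a `C²` function with nonvanishing gradient (equivalently, after a rigid motion,
the boundary is locally the graph of a `C²` function with `Ω` strictly on one side). -/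
def IsC2Boundary {n : ℕ} (Ω : Set (EuclideanSpace ℝ (Fin n))) : Prop :=
  ∀ x ∈ frontier Ω, ∃ f : EuclideanSpace ℝ (Fin n) → ℝ, ∃ U ∈ nhds x,
    ContDiffOn ℝ 2 f U ∧ (∀ y ∈ U, fderiv ℝ f y ≠ 0) ∧
    U ∩ Ω = U ∩ {y | f y < 0} ∧ U ∩ frontier Ω = U ∩ {y | f y = 0}

abbrev EE (n : ℕ) := EuclideanSpace ℝ (Fin n)

def lapl {n : ℕ} (h : EE n →L[ℝ] EE n) : ℝ :=
  ∑ i : Fin n, ⟪h (EuclideanSpace.single i (1 : ℝ)), EuclideanSpace.single i (1 : ℝ)⟫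

def C2At {n : ℕ} (v : EE n → ℝ) (g : EE n → EE n) (h : EE n →L[ℝ] EE n) (x : EE n) : Prop :=
  (∀ᶠ y in nhds x, HasGradientAt v (g y) y) ∧ HasFDerivAt g h x

lemma lapl_sub {n : ℕ} (h k : EE n →L[ℝ] EE n) : lapl (h - k) = lapl h - lapl k := by
  simp [lapl, inner_sub_left, Finset.sum_sub_distrib]

lemma lapl_add {n : ℕ} (h k : EE n →L[ℝ] EE n) : lapl (h + k) = lapl h + lapl k := by
  simp [lapl, inner_add_left, Finset.sum_add_distrib]

lemma lapl_smul {n : ℕ} (c : ℝ) (h : EE n →L[ℝ] EE n) : lapl (c • h) = c * lapl h := by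
  simp [lapl, Finset.mul_sum, real_inner_smul_left]

lemma lapl_id {n : ℕ} : lapl (ContinuousLinearMap.id ℝ (EE n)) = n := by
  simp [lapl]

lemma lapl_eq_trace {n : ℕ} (h : EE n →L[ℝ] EE n) : lapl h = LinearMap.trace ℝ (EE n) h.toLinearMap := by
  rw [LinearMap.trace_eq_sum_inner _ (EuclideanSpace.basisFun (Fin n) ℝ)]
  simp [lapl, real_inner_comm]

lemma lapl_rank_one {n : ℕ} (ν : EE n) :
    lapl ((innerSL ℝ ν).smulRight ν) = ‖ν‖ ^ 2 := by
  rw [EuclideanSpace.norm_sq_eq]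
  simp [lapl, inner_smul_left, EuclideanSpace.inner_single_right, pow_two]

lemma C2At.sub {n : ℕ} {v v' : EE n → ℝ} {g g' : EE n → EE n} {h h' : EE n →L[ℝ] EE n} {x : EE n}
    (H : C2At v g h x) (H' : C2At v' g' h' x) :
    C2At (fun y => v y - v' y) (fun y => g y - g' y) (h - h') x := by
  refine ⟨?_, H.2.sub H'.2⟩
  filter_upwards [H.1, H'.1] with y h1 h2
  rw [hasGradientAt_iff_hasFDerivAt] at *
  refine (h1.sub h2).congr_fderiv ?_
  simp

lemma C2At.trans {n : ℕ} {v : EE n → ℝ} {g : EE n → EE n} {h : EE n →L[ℝ] EE n} {x c : EE n}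
    (H : C2At v g h (x + c)) :
    C2At (fun y => v (y + c)) (fun y => g (y + c)) h x := by
  have hc : Tendsto (fun y => y + c) (nhds x) (nhds (x + c)) := by
    apply Continuous.tendsto; fun_prop
  refine ⟨?_, ?_⟩
  · filter_upwards [hc.eventually H.1] with y h1
    rw [hasGradientAt_iff_hasFDerivAt] at *
    exact (hasFDerivAt_comp_add_right c).mpr h1
  · exact (hasFDerivAt_comp_add_right c).mpr H.2

lemma C2At.max {n : ℕ} {v : EE n → ℝ} {g : EE n → EE n} {h : EE n →L[ℝ] EE n} {x : EE n}
    (H : C2At v g h x) (hm : IsLocalMax v x) : g x = 0 ∧ lapl h ≤ 0 := by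
  have h0 : g x = 0 := by
    have := hm.hasFDerivAt_eq_zero (hasGradientAt_iff_hasFDerivAt.1 H.1.self_of_nhds)
    simpa using this
  refine ⟨h0, ?_⟩
  apply Finset.sum_nonpos
  intro i _
  set e : EE n := EuclideanSpace.single i (1 : ℝ)
  by_contra hneg
  push Not at hneg
  have hl : ∀ s : ℝ, HasDerivAt (fun s : ℝ => x + s • e) e s := by
    intro s
    simpa using ((hasDerivAt_id s).smul_const e).const_add x
  have hlc : Tendsto (fun s : ℝ => x + s • e) (nhds 0) (nhds x) := by
    have : Continuous (fun s : ℝ => x + s • e) := by fun_prop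
    simpa using this.tendsto 0
  have hev : ∀ᶠ s in nhds (0:ℝ), HasDerivAt (fun s : ℝ => v (x + s • e)) ⟪g (x + s • e), e⟫ s := by
    filter_upwards [hlc.eventually H.1] with s hs
    have := (hasGradientAt_iff_hasFDerivAt.1 hs).comp_hasDerivAt s (hl s)
    refine this.congr_deriv ?_
    simp
  have hd : deriv (fun s : ℝ => v (x + s • e)) =ᶠ[nhds 0] fun s => ⟪g (x + s • e), e⟫ :=
    hev.mono fun s hs => hs.deriv
  have hgd : HasDerivAt (fun s : ℝ => ⟪g (x + s • e), e⟫) ⟪h e, e⟫ 0 := by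
    have h2 : HasFDerivAt g h (x + (0:ℝ) • e) := by simpa using H.2
    have := (h2.comp_hasDerivAt (0:ℝ) (hl 0)).inner ℝ (hasDerivAt_const (0:ℝ) e)
    simpa using this
  have hdd : deriv (deriv (fun s : ℝ => v (x + s • e))) 0 = ⟪h e, e⟫ := by
    rw [hd.deriv_eq]; exact hgd.deriv
  have hmin : IsLocalMin (fun s : ℝ => v (x + s • e)) 0 := by
    apply isLocalMin_of_deriv_deriv_pos
    · rw [hdd]; exact hneg
    · rw [hd.self_of_nhds]; simp [h0]
    · exact hev.self_of_nhds.continuousAt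
  have hmax : IsLocalMax (fun s : ℝ => v (x + s • e)) 0 := by
    have : ∀ᶠ s in nhds (0:ℝ), v (x + s • e) ≤ v x := hlc.eventually hm
    simpa [IsLocalMax, IsMaxFilter] using this
  have hconst : (fun s : ℝ => v (x + s • e)) =ᶠ[nhds 0] fun _ => v x := by
    filter_upwards [hmin, hmax] with s h1 h2
    simp at h1 h2
    exact le_antisymm h2 h1
  have h3 : deriv (fun s : ℝ => v (x + s • e)) =ᶠ[nhds 0] deriv (fun _ => v x) := hconst.deriv
  rw [h3.deriv_eq] at hdd
  simp at hdd
  linarith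

/-- barrier `φ(⟨z,ν⟩) + k‖z-y‖²` -/
lemma C2At.barrier {n : ℕ} (ν y : EE n) (k c : ℝ) (φ φ' : ℝ → ℝ) (φ'' : ℝ) (x : EE n)
    (h1 : ∀ᶠ s in nhds ⟪x, ν⟫, HasDerivAt φ (φ' s) s) (h2 : HasDerivAt φ' φ'' ⟪x, ν⟫) :
    C2At (fun z => c + φ ⟪z, ν⟫ + k * ‖z - y‖ ^ 2) (fun z => φ' ⟪z, ν⟫ • ν + (2 * k) • (z - y))
      (φ'' • ((innerSL ℝ ν).smulRight ν) + (2 * k) • ContinuousLinearMap.id ℝ (EE n)) x := by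
  have hin : ∀ z : EE n, HasFDerivAt (fun z : EE n => ⟪z, ν⟫) (innerSL ℝ ν) z := by
    intro z
    have := (innerSL ℝ ν).hasFDerivAt (x := z)
    simpa [real_inner_comm] using this
  have hc : Tendsto (fun z : EE n => ⟪z, ν⟫) (nhds x) (nhds ⟪x, ν⟫) := by
    apply Continuous.tendsto; fun_prop
  refine ⟨?_, ?_⟩
  · filter_upwards [hc.eventually h1] with z hz
    rw [hasGradientAt_iff_hasFDerivAt]
    have e1 := hz.comp_hasFDerivAt z (hin z)
    have e2 : HasFDerivAt (fun z : EE n => ‖z - y‖ ^ 2) (2 • (innerSL ℝ (z - y))) z := by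
      have := ((hasFDerivAt_id z).sub_const y).norm_sq
      simpa using this
    have e3 := (e1.const_add c).add (e2.const_mul k)
    refine e3.congr_fderiv ?_
    ext w
    simp [inner_add_left, real_inner_smul_left]
    ring
  · have e1 := (h2.comp_hasFDerivAt x (hin x)).smul_const ν
    have e2 : HasFDerivAt (fun z : EE n => (2 * k) • (z - y)) ((2 * k) • ContinuousLinearMap.id ℝ (EE n)) x :=
      ((hasFDerivAt_id (𝕜 := ℝ) x).sub_const y).const_smul (2 * k)
    refine (e1.add e2).congr_fderiv ?_
    ext w
    simp
    ring

lemma lapl_barrier {n : ℕ} (ν : EE n) (hν : ‖ν‖ = 1) (k φ'' : ℝ) :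
    lapl (φ'' • ((innerSL ℝ ν).smulRight ν) + (2 * k) • ContinuousLinearMap.id ℝ (EE n))
      = φ'' + 2 * k * n := by
  rw [lapl_add, lapl_smul, lapl_smul, lapl_rank_one, lapl_id, hν]; ring

/-- reflected / isometrically transported function -/
lemma C2At.isom {n : ℕ} {v : EE n → ℝ} {g : EE n → EE n} {h : EE n →L[ℝ] EE n} {x : EE n}
    (S : EE n ≃ₗᵢ[ℝ] EE n) (H : C2At v g h (S x)) :
    ∃ h', C2At (fun y => v (S y)) (fun y => S.symm (g (S y))) h' x ∧ lapl h' = lapl h := by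
  have hc : Tendsto (fun y => S y) (nhds x) (nhds (S x)) := S.continuous.tendsto x
  have hS : ∀ z, HasFDerivAt (fun y => S y) (S.toContinuousLinearEquiv : EE n →L[ℝ] EE n) z :=
    fun z => S.toContinuousLinearEquiv.hasFDerivAt
  have hS' : ∀ z, HasFDerivAt (fun y => S.symm y) (S.symm.toContinuousLinearEquiv : EE n →L[ℝ] EE n) z :=
    fun z => S.symm.toContinuousLinearEquiv.hasFDerivAt
  refine ⟨(S.symm.toContinuousLinearEquiv : EE n →L[ℝ] EE n) ∘L (h ∘L (S.toContinuousLinearEquiv : EE n →L[ℝ] EE n)), ⟨?_, ?_⟩, ?_⟩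
  · filter_upwards [hc.eventually H.1] with y hy
    rw [hasGradientAt_iff_hasFDerivAt] at *
    refine (hy.comp y (hS y)).congr_fderiv ?_
    ext w
    simp
    rw [← S.inner_map_map (S.symm (g (S y))) w]
    simp
  · exact (hS' _).comp x (H.2.comp x (hS x))
  · rw [lapl_eq_trace, lapl_eq_trace]
    have := LinearMap.trace_conj' h.toLinearMap (S.symm.toLinearEquiv)
    rw [← this]
    congr 1

structure Sol {n : ℕ} (p β A κ : ℝ) (ν : EE n) (W : EE n → ℝ) (G : EE n → EE n)
    (H : EE n → (EE n →L[ℝ] EE n)) : Prop where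
  nu : ‖ν‖ = 1
  grad : ∀ z, ‖z‖ < 1 / κ → κ < ⟪z, ν⟫ → HasGradientAt W (G z) z
  hess : ∀ z, ‖z‖ < 1 / κ → κ < ⟪z, ν⟫ → HasFDerivAt G (H z) z
  eqn : ∀ z, ‖z‖ < 1 / κ → κ < ⟪z, ν⟫ → |lapl (H z) + ‖G z‖ ^ p| ≤ κ
  gbd : ∀ z, ‖z‖ < 1 / κ → κ < ⟪z, ν⟫ → ‖G z‖ ≤ A * ⟪z, ν⟫ ^ (-β)
  wbd : ∀ z, ‖z‖ < 1 / κ → κ < ⟪z, ν⟫ → |W z| ≤ A * ⟪z, ν⟫ ^ (1 - β)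

lemma Sol.mono {n : ℕ} {p β A κ κ' : ℝ} {ν : EE n} {W : EE n → ℝ} {G : EE n → EE n}
    {H : EE n → (EE n →L[ℝ] EE n)} (S : Sol p β A κ ν W G H) (hκ : 0 < κ) (h : κ ≤ κ') :
    Sol p β A κ' ν W G H := by
  have h1 : 1 / κ' ≤ 1 / κ := one_div_le_one_div_of_le hκ h
  exact ⟨S.nu, fun z a b => S.grad z (by linarith) (by linarith),
    fun z a b => S.hess z (by linarith) (by linarith),
    fun z a b => (S.eqn z (by linarith) (by linarith)).trans h,
    fun z a b => S.gbd z (by linarith) (by linarith),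
    fun z a b => S.wbd z (by linarith) (by linarith)⟩

lemma Sol.c2 {n : ℕ} {p β A κ : ℝ} {ν : EE n} {W : EE n → ℝ} {G : EE n → EE n}
    {H : EE n → (EE n →L[ℝ] EE n)} (S : Sol p β A κ ν W G H) {z : EE n}
    (h1 : ‖z‖ < 1 / κ) (h2 : κ < ⟪z, ν⟫) : C2At W G (H z) z := by
  refine ⟨?_, S.hess z h1 h2⟩
  have e1 : ∀ᶠ y : EE n in nhds z, ‖y‖ < 1 / κ := (continuous_norm.tendsto z).eventually_lt_const h1
  have e2 : ∀ᶠ y : EE n in nhds z, κ < ⟪y, ν⟫ := by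
    have : Continuous (fun y : EE n => ⟪y, ν⟫) := by fun_prop
    exact (this.tendsto z).eventually_const_lt h2
  filter_upwards [e1, e2] with y a b using S.grad y a b

lemma Sol.cont {n : ℕ} {p β A κ : ℝ} {ν : EE n} {W : EE n → ℝ} {G : EE n → EE n}
    {H : EE n → (EE n →L[ℝ] EE n)} (S : Sol p β A κ ν W G H) {z : EE n}
    (h1 : ‖z‖ < 1 / κ) (h2 : κ < ⟪z, ν⟫) : ContinuousAt W z :=
  (hasGradientAt_iff_hasFDerivAt.1 (S.grad z h1 h2)).continuousAt

lemma rpow_diff_le {p m a b : ℝ} (hp : 1 ≤ p) (ha : 0 ≤ a) (hb : 0 ≤ b) (ham : a ≤ m) (hbm : b ≤ m) :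
    |a ^ p - b ^ p| ≤ p * m ^ (p - 1) * |a - b| := by
  have := (convex_Icc (0:ℝ) m).norm_image_sub_le_of_norm_hasDerivWithin_le (f := fun x => x ^ p)
    (f' := fun x => p * x ^ (p - 1)) (C := p * m ^ (p - 1)) (x := b) (y := a)
    (fun x hx => (Real.hasDerivAt_rpow_const (Or.inr hp)).hasDerivWithinAt) ?_ ⟨hb, hbm⟩ ⟨ha, ham⟩
  · simpa using this
  · intro x hx
    rw [Real.norm_eq_abs, abs_of_nonneg (mul_nonneg (by linarith) (Real.rpow_nonneg hx.1 _))]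
    have : x ^ (p - 1) ≤ m ^ (p - 1) := Real.rpow_le_rpow hx.1 hx.2 (by linarith)
    nlinarith

lemma ev_div_lt (X : ℝ) {c : ℝ} (hc : 0 < c) : ∀ᶠ r : ℝ in atTop, X / r < c :=
  ((tendsto_const_nhds (x := X)).div_atTop tendsto_id).eventually_lt_const hc

set_option maxHeartbeats 1600000 in
lemma tang {n : ℕ} {p β A : ℝ} (hp : 2 < p) (hβ : β = 1 / (p - 1)) (hA : 0 < A) {ε R : ℝ}
    (hε : 0 < ε) (hR : 1 ≤ R) :
    ∃ κ > 0, ∀ (ν : EE n) W G H, Sol p β A κ ν W G H → ∀ x y, ‖x‖ ≤ R → ‖y‖ ≤ R →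
      ⟪x, ν⟫ = ⟪y, ν⟫ → 1 / R ≤ ⟪x, ν⟫ → W x - W y ≤ ε := by
  have hβ0 : 0 < β := by rw [hβ]; apply one_div_pos.2; linarith
  have hβ1 : β < 1 := by rw [hβ, div_lt_one] <;> linarith
  have hβp : β * (p - 1) = 1 := by rw [hβ]; field_simp [show p - 1 ≠ 0 by linarith]
  -- choose σ
  obtain ⟨σ, hσ0, hσR, hσ⟩ : ∃ σ : ℝ, 0 < σ ∧ σ < 1 / R ∧ 2 * A * σ ^ (1 - β) < ε / 3 := by
    have h1 : Tendsto (fun σ : ℝ => 2 * A * σ ^ (1 - β)) (nhdsWithin 0 (Ioi 0)) (nhds 0) := by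
      have : ContinuousAt (fun σ : ℝ => 2 * A * σ ^ (1 - β)) 0 :=
        continuousAt_const.mul (Real.continuousAt_rpow_const _ _ (Or.inr (by linarith)))
      have h2 := this.tendsto
      simp only [Real.zero_rpow (show 1 - β ≠ 0 by linarith), mul_zero] at h2
      exact h2.mono_left nhdsWithin_le_nhds
    have h2 : ∀ᶠ σ : ℝ in nhdsWithin 0 (Ioi 0), σ < 1 / R :=
      (eventually_lt_nhds (by positivity)).filter_mono nhdsWithin_le_nhds
    obtain ⟨σ, a, b, c⟩ := ((h1.eventually_lt_const (show 0 < ε / 3 by linarith)).and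
      (h2.and eventually_mem_nhdsWithin)).exists
    exact ⟨σ, c, b, a⟩
  -- choose S
  obtain ⟨Sg, hSgR, hSg⟩ : ∃ Sg : ℝ, R < Sg ∧ 2 * R * (A * Sg ^ (-β)) < ε / 3 := by
    have h1 : Tendsto (fun s : ℝ => 2 * R * (A * s ^ (-β))) atTop (nhds 0) := by
      simpa using ((tendsto_rpow_neg_atTop hβ0).const_mul A).const_mul (2 * R)
    obtain ⟨s, a, b⟩ := ((h1.eventually_lt_const (show 0 < ε / 3 by linarith)).and
      (eventually_gt_atTop R)).exists
    exact ⟨s, b, a⟩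
  have hSg0 : 0 < Sg := by linarith
  set C3 : ℝ := p * (A * σ ^ (-β)) ^ (p - 1) with hC3
  have hC30 : 0 ≤ C3 := by positivity
  set m : ℝ := C3 + 1 with hm
  have hm0 : 1 ≤ m := by linarith
  set K : ℝ := 2 * A * Sg ^ (1 - β) with hK
  have hK0 : 0 ≤ K := by positivity
  set c0 : ℝ := ε / 3 * Real.exp (-m * Sg) with hc0
  have hc00 : 0 < c0 := by positivity
  -- choose ρ
  obtain ⟨ρ, hρ1, hρ2, hρR⟩ : ∃ ρ : ℝ, K * R ^ 2 / ρ < ε / 3 ∧ (2 * n * K + 2 * C3 * K) / ρ < c0 / 2 ∧ R < ρ := by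
    obtain ⟨ρ, a, b, c⟩ := ((ev_div_lt (K * R ^ 2) (show 0 < ε / 3 by linarith)).and
      ((ev_div_lt (2 * n * K + 2 * C3 * K) (half_pos hc00)).and (eventually_gt_atTop R))).exists
    exact ⟨ρ, a, b, c⟩
  have hρ0 : 1 < ρ := by linarith
  set κ : ℝ := min (σ / 2) (min (1 / (ρ + 2 * R + 1)) (c0 / 8)) with hκ
  have hκ0 : 0 < κ := by
    simp only [hκ, lt_min_iff]; refine ⟨by linarith, by positivity, by linarith⟩
  have hκσ : κ < σ := lt_of_le_of_lt (min_le_left _ _) (by linarith)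
  have hκρ : ρ + 2 * R < 1 / κ := by
    have h1 : κ ≤ 1 / (ρ + 2 * R + 1) := (min_le_right _ _).trans (min_le_left _ _)
    have h2 := one_div_le_one_div_of_le hκ0 h1
    rw [one_div_one_div] at h2
    linarith
  have hκc : κ ≤ c0 / 8 := (min_le_right _ _).trans (min_le_right _ _)
  refine ⟨κ, hκ0, ?_⟩
  intro ν W G H S x y hx hy hxy hRx
  by_contra hcon
  push Not at hcon
  set h : EE n := x - y with hh
  have hhν : ⟪h, ν⟫ = 0 := by rw [hh, inner_sub_left]; linarith
  have hhn : ‖h‖ ≤ 2 * R := (norm_sub_le _ _).trans (by linarith)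
  have hain : ∀ z, ⟪z + h, ν⟫ = ⟪z, ν⟫ := fun z => by rw [inner_add_left, hhν, add_zero]
  have hκ2 : ρ < 1 / κ := by linarith
  set φ : ℝ → ℝ := fun s => ε / 3 * ((1 - Real.exp (-m * s)) / m) with hφ
  set φ' : ℝ → ℝ := fun s => ε / 3 * Real.exp (-m * s) with hφ'
  have hd1 : ∀ s, HasDerivAt φ (φ' s) s := by
    intro s
    have h1 : HasDerivAt (fun s : ℝ => Real.exp (-m * s)) (Real.exp (-m * s) * (-m)) s := by
      simpa using ((hasDerivAt_id s).const_mul (-m)).exp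
    have h2 := ((h1.const_sub 1).div_const m).const_mul (ε / 3)
    refine h2.congr_deriv ?_
    simp only [hφ']; field_simp
  have hd2 : ∀ s, HasDerivAt φ' (-m * φ' s) s := by
    intro s
    have h1 : HasDerivAt (fun s : ℝ => Real.exp (-m * s)) (Real.exp (-m * s) * (-m)) s := by
      simpa using ((hasDerivAt_id s).const_mul (-m)).exp
    refine (h1.const_mul (ε / 3)).congr_deriv ?_
    simp only [hφ']; ring
  have hφ0 : ∀ s, 0 ≤ s → 0 ≤ φ s := by
    intro s hs
    have : Real.exp (-m * s) ≤ 1 := by rw [Real.exp_le_one_iff, neg_mul]; exact neg_nonpos.2 (mul_nonneg (by linarith) hs)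
    simp only [hφ]
    have : 0 ≤ 1 - Real.exp (-m * s) := by linarith
    positivity
  have hφ1 : ∀ s, φ s ≤ ε / 3 := by
    intro s
    have : (1 - Real.exp (-m * s)) / m ≤ 1 := by
      rw [div_le_one (by linarith)]; have := Real.exp_pos (-m * s); linarith
    exact mul_le_of_le_one_right (by linarith) this
  set k : ℝ := K / ρ ^ 2 with hk
  have hk0 : 0 ≤ k := by positivity
  set Q : EE n → ℝ := fun z => ε / 3 + φ ⟪z, ν⟫ + k * ‖z - 0‖ ^ 2 with hQ
  set D : Set (EE n) := {z | σ ≤ ⟪z, ν⟫ ∧ ⟪z, ν⟫ ≤ Sg ∧ ‖z‖ ≤ ρ} with hD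
  have hDc : IsCompact D := by
    apply Metric.isCompact_of_isClosed_isBounded
    · have c1 : Continuous (fun z : EE n => ⟪z, ν⟫) := by fun_prop
      exact (isClosed_le continuous_const c1).inter
        ((isClosed_le c1 continuous_const).inter (isClosed_le continuous_norm continuous_const))
    · refine (Metric.isBounded_closedBall (x := (0 : EE n)) (r := ρ)).subset ?_
      intro z hz; simpa using hz.2.2
  have reg1 : ∀ z ∈ D, ‖z‖ < 1 / κ ∧ κ < ⟪z, ν⟫ := fun z hz => ⟨by linarith [hz.2.2], by linarith [hz.1]⟩
  have reg2 : ∀ z ∈ D, ∀ s ∈ Icc (0:ℝ) 1, ‖z + s • h‖ < 1 / κ ∧ κ < ⟪z + s • h, ν⟫ := by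
    intro z hz s hs
    refine ⟨?_, ?_⟩
    · have : ‖s • h‖ ≤ 2 * R := by
        rw [norm_smul, Real.norm_eq_abs, abs_of_nonneg hs.1]
        exact (mul_le_of_le_one_left (norm_nonneg h) hs.2).trans hhn
      linarith [norm_add_le z (s • h), hz.2.2]
    · rw [inner_add_left, inner_smul_left, hhν]; simp; linarith [hz.1]
  have reg3 : ∀ z ∈ D, ‖z + h‖ < 1 / κ ∧ κ < ⟪z + h, ν⟫ := by
    intro z hz; simpa using reg2 z hz 1 ⟨by norm_num, le_rfl⟩
  set v : EE n → ℝ := fun z => W (z + h) - W z with hv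
  have hcontv : ContinuousOn (fun z => v z - Q z) D := by
    intro z hz
    apply ContinuousAt.continuousWithinAt
    have r1 := reg1 z hz
    have r3 := reg3 z hz
    have a1 : ContinuousAt (fun z => W (z + h)) z := by
      have := (S.cont r3.1 r3.2).comp (f := fun z => z + h) (x := z) (by fun_prop)
      exact this
    have a2 := S.cont r1.1 r1.2
    have a3 : ContinuousAt φ ⟪z, ν⟫ := (hd1 _).continuousAt
    have a4 : ContinuousAt (fun z : EE n => φ ⟪z, ν⟫) z :=
      a3.comp (f := fun z : EE n => ⟪z, ν⟫) (x := z) (by fun_prop)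
    have a5 : ContinuousAt (fun z : EE n => k * ‖z - 0‖ ^ 2) z := by fun_prop
    exact (a1.sub a2).sub ((continuousAt_const.add a4).add a5)
  have hyD : y ∈ D := ⟨by linarith, by
    have := real_inner_le_norm y ν; rw [S.nu] at this; linarith, by linarith⟩
  have hypos : 0 < v y - Q y := by
    have e1 : y + h = x := by rw [hh]; abel
    have e2 : k * ‖y - 0‖ ^ 2 ≤ ε / 3 := by
      rw [sub_zero, hk]
      have : ‖y‖ ^ 2 ≤ R ^ 2 := by gcongr
      have h3 : K / ρ ^ 2 * ‖y‖ ^ 2 ≤ K * R ^ 2 / ρ := by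
        rw [div_mul_eq_mul_div, div_le_div_iff₀ (by positivity) (by positivity)]
        have : K * ‖y‖ ^ 2 ≤ K * R ^ 2 := by gcongr
        have h4 : ρ ≤ ρ ^ 2 := le_self_pow₀ hρ0.le two_ne_zero
        have h5 : 0 ≤ K * R ^ 2 := by positivity
        calc K * ‖y‖ ^ 2 * ρ ≤ K * R ^ 2 * ρ := by gcongr
          _ ≤ K * R ^ 2 * ρ ^ 2 := by gcongr
      linarith
    simp only [hv, hQ, e1]
    linarith [hφ1 ⟪y, ν⟫]
  obtain ⟨z, hzD, hzmax⟩ := hDc.exists_isMaxOn ⟨y, hyD⟩ hcontv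
  have hzpos : 0 < v z - Q z := hypos.trans_le (hzmax hyD)
  have r1 := reg1 z hzD
  have r3 := reg3 z hzD
  have hz0 : 0 < ⟪z, ν⟫ := by linarith [hzD.1]
  have hkz : 0 ≤ k * ‖z - 0‖ ^ 2 := by positivity
  have hw1 := S.wbd z r1.1 r1.2
  have hw2 := S.wbd (z + h) r3.1 r3.2
  rw [hain] at hw2
  have hvle : v z ≤ 2 * A * ⟪z, ν⟫ ^ (1 - β) := by
    simp only [hv]; linarith [abs_le.1 hw1, abs_le.1 hw2]
  have hφz := hφ0 _ hz0.le
  -- boundary cases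
  have b1 : σ < ⟪z, ν⟫ := by
    refine lt_of_le_of_ne hzD.1 fun heq => ?_
    rw [← heq] at hvle
    simp only [hQ] at hzpos
    linarith
  have b2 : ⟪z, ν⟫ < Sg := by
    refine lt_of_le_of_ne hzD.2.1 fun heq => ?_
    have hseg : ‖W (z + h) - W z‖ ≤ A * Sg ^ (-β) * ‖(z + h) - z‖ := by
      apply Convex.norm_image_sub_le_of_norm_hasFDerivWithin_le (s := segment ℝ z (z + h))
        (f' := fun w => InnerProductSpace.toDual ℝ (EE n) (G w))
      · intro w hw
        rw [segment_eq_image'] at hw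
        obtain ⟨s, hs, rfl⟩ := hw
        simp only [add_sub_cancel_left]
        have := reg2 z hzD s hs
        exact (hasGradientAt_iff_hasFDerivAt.1 (S.grad _ this.1 this.2)).hasFDerivWithinAt
      · intro w hw
        rw [segment_eq_image'] at hw
        obtain ⟨s, hs, rfl⟩ := hw
        simp only [add_sub_cancel_left]
        have := reg2 z hzD s hs
        rw [LinearIsometryEquiv.norm_map]
        refine (S.gbd _ this.1 this.2).trans (le_of_eq ?_)
        rw [inner_add_left, inner_smul_left, hhν]; simp [heq]
      · exact convex_segment _ _
      · exact left_mem_segment _ _ _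
      · exact right_mem_segment _ _ _
    rw [add_sub_cancel_left, Real.norm_eq_abs] at hseg
    have h5 : A * Sg ^ (-β) * ‖h‖ ≤ A * Sg ^ (-β) * (2 * R) := by gcongr
    have h6 := le_abs_self (W (z + h) - W z)
    simp only [hQ, hv] at hzpos
    linarith
  have b3 : ‖z‖ < ρ := by
    refine lt_of_le_of_ne hzD.2.2 fun heq => ?_
    have h5 : ⟪z, ν⟫ ^ (1 - β) ≤ Sg ^ (1 - β) := Real.rpow_le_rpow hz0.le hzD.2.1 (by linarith)
    have h6 : k * ‖z - 0‖ ^ 2 = K := by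
      rw [sub_zero, heq, hk]; field_simp
    have h7 : 2 * A * ⟪z, ν⟫ ^ (1 - β) ≤ K := by rw [hK]; gcongr
    simp only [hQ, h6] at hzpos
    linarith
  -- interior
  have hDn : D ∈ nhds z := by
    have c1 : Continuous (fun z : EE n => ⟪z, ν⟫) := by fun_prop
    filter_upwards [(c1.tendsto z).eventually_const_lt b1, (c1.tendsto z).eventually_lt_const b2,
      (continuous_norm.tendsto z).eventually_lt_const b3] with w a b c using ⟨a.le, b.le, c.le⟩
  have hloc : IsLocalMax (fun z => v z - Q z) z := hzmax.isLocalMax hDn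
  have hC2 := ((C2At.trans (S.c2 r3.1 r3.2)).sub (S.c2 r1.1 r1.2)).sub
    (C2At.barrier ν 0 k (ε / 3) φ φ' (-m * φ' ⟪z, ν⟫) z (Eventually.of_forall hd1) (hd2 _))
  obtain ⟨hg, hl⟩ := hC2.max hloc
  rw [lapl_sub, lapl_sub, lapl_barrier ν S.nu] at hl
  have e1 := abs_le.1 (S.eqn z r1.1 r1.2)
  have e2 := abs_le.1 (S.eqn (z + h) r3.1 r3.2)
  have hg1 := S.gbd z r1.1 r1.2
  have hg2 := S.gbd (z + h) r3.1 r3.2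
  rw [hain] at hg2
  have hmono : A * ⟪z, ν⟫ ^ (-β) ≤ A * σ ^ (-β) := by
    have := Real.rpow_le_rpow_of_nonpos hσ0 hzD.1 (show -β ≤ 0 by linarith)
    gcongr
  have hpw := rpow_diff_le (p := p) (by linarith) (norm_nonneg (G (z + h))) (norm_nonneg (G z))
    (hg2.trans hmono) (hg1.trans hmono)
  rw [← hC3] at hpw
  have hgd : |‖G (z + h)‖ - ‖G z‖| ≤ φ' ⟪z, ν⟫ + 2 * k * ρ := by
    refine (abs_norm_sub_norm_le _ _).trans ?_
    have : G (z + h) - G z = φ' ⟪z, ν⟫ • ν + (2 * k) • (z - 0) := sub_eq_zero.1 hg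
    rw [this]
    refine (norm_add_le _ _).trans ?_
    have hp' : 0 ≤ φ' ⟪z, ν⟫ := by simp only [hφ']; positivity
    rw [norm_smul, norm_smul, S.nu, Real.norm_eq_abs, Real.norm_eq_abs, abs_of_nonneg hp',
      abs_of_nonneg (by positivity), sub_zero, mul_one]
    have : 2 * k * ‖z‖ ≤ 2 * k * ρ := by gcongr
    linarith
  have hpw2 : C3 * |‖G (z + h)‖ - ‖G z‖| ≤ C3 * (φ' ⟪z, ν⟫ + 2 * k * ρ) := by gcongr
  have hpw3 := abs_le.1 (hpw.trans hpw2)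
  have hφc : c0 ≤ φ' ⟪z, ν⟫ := by
    simp only [hc0, hφ']
    have : Real.exp (-m * Sg) ≤ Real.exp (-m * ⟪z, ν⟫) := by
      apply Real.exp_le_exp.2; rw [neg_mul, neg_mul]; exact neg_le_neg (mul_le_mul_of_nonneg_left b2.le (by linarith))
    gcongr
  have hfin : 2 * k * n + C3 * (2 * k * ρ) ≤ (2 * n * K + 2 * C3 * K) / ρ := by
    have e3 : C3 * (2 * k * ρ) = 2 * C3 * K / ρ := by rw [hk]; field_simp
    have e4 : 2 * k * n ≤ 2 * n * K / ρ := by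
      have : k ≤ K / ρ := by
        rw [hk]; exact div_le_div_of_nonneg_left hK0 (by linarith) (le_self_pow₀ hρ0.le two_ne_zero)
      calc 2 * k * n ≤ 2 * (K / ρ) * n := by gcongr
        _ = 2 * n * K / ρ := by ring
    rw [e3, add_div]; linarith
  have : -m * φ' ⟪z, ν⟫ = -C3 * φ' ⟪z, ν⟫ - φ' ⟪z, ν⟫ := by rw [hm]; ring
  rw [this] at hl
  have hx1 : C3 * (φ' ⟪z, ν⟫ + 2 * k * ρ) = C3 * φ' ⟪z, ν⟫ + C3 * (2 * k * ρ) := by ring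
  linarith

set_option maxHeartbeats 1000000 in
lemma subcomp {n : ℕ} {p β A κ : ℝ} {ν : EE n} {W : EE n → ℝ} {G : EE n → EE n}
    {H : EE n → (EE n →L[ℝ] EE n)} (S : Sol p β A κ ν W G H) (y : EE n) (ρ k s0 lo hi c : ℝ)
    (φ φ' φ'' : ℝ → ℝ) (hρ : 0 ≤ ρ) (hk : 0 ≤ k) (hκlo : κ < lo) (hs0 : s0 < lo) (hyρ : ‖y‖ + ρ < 1 / κ)
    (hd1 : ∀ s, s0 < s → HasDerivAt φ (φ' s) s) (hd2 : ∀ s, s0 < s → HasDerivAt φ' (φ'' s) s)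
    (hInt : ∀ s, lo < s → s < hi → ∀ d : EE n, ‖d‖ ≤ 2 * k * ρ →
      κ + 2 * k * n < φ'' s + ‖φ' s • ν - d‖ ^ p)
    (hside : ∀ z : EE n, lo ≤ ⟪z, ν⟫ → ⟪z, ν⟫ ≤ hi → ‖z - y‖ = ρ → c + φ ⟪z, ν⟫ - k * ρ ^ 2 ≤ W z)
    (hhi : ∀ z : EE n, ⟪z, ν⟫ = hi → ‖z - y‖ ≤ ρ → c + φ hi - k * ‖z - y‖ ^ 2 ≤ W z)
    (hlo : (∀ z : EE n, ⟪z, ν⟫ = lo → ‖z - y‖ ≤ ρ → c + φ lo - k * ‖z - y‖ ^ 2 ≤ W z) ∨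
      A * lo ^ (-β) + 2 * k * ρ < φ' lo) :
    ∀ z : EE n, lo ≤ ⟪z, ν⟫ → ⟪z, ν⟫ ≤ hi → ‖z - y‖ ≤ ρ → c + φ ⟪z, ν⟫ - k * ‖z - y‖ ^ 2 ≤ W z := by
  intro x hx1 hx2 hx3
  by_contra hcon
  push Not at hcon
  set D : Set (EE n) := {z | lo ≤ ⟪z, ν⟫ ∧ ⟪z, ν⟫ ≤ hi ∧ ‖z - y‖ ≤ ρ} with hD
  have c1 : Continuous (fun z : EE n => ⟪z, ν⟫) := by fun_prop
  have c2 : Continuous (fun z : EE n => ‖z - y‖) := by fun_prop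
  have hDc : IsCompact D := by
    apply Metric.isCompact_of_isClosed_isBounded
    · exact (isClosed_le continuous_const c1).inter
        ((isClosed_le c1 continuous_const).inter (isClosed_le c2 continuous_const))
    · refine (Metric.isBounded_closedBall (x := y) (r := ρ)).subset ?_
      intro z hz; simpa [dist_eq_norm] using hz.2.2
  have reg : ∀ z ∈ D, ‖z‖ < 1 / κ ∧ κ < ⟪z, ν⟫ := by
    intro z hz
    refine ⟨?_, by linarith [hz.1]⟩
    have : ‖z‖ ≤ ‖z - y‖ + ‖y‖ := by simpa using norm_add_le (z - y) y
    linarith [hz.2.2]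
  have hC2 : ∀ z ∈ D, C2At (fun z => (c + φ ⟪z, ν⟫ + (-k) * ‖z - y‖ ^ 2) - W z)
      (fun z => (φ' ⟪z, ν⟫ • ν + (2 * (-k)) • (z - y)) - G z)
      ((φ'' ⟪z, ν⟫ • ((innerSL ℝ ν).smulRight ν) + (2 * (-k)) • ContinuousLinearMap.id ℝ (EE n)) - H z) z := by
    intro z hz
    have hlt : s0 < ⟪z, ν⟫ := by linarith [hz.1]
    refine (C2At.barrier ν y (-k) c φ φ' (φ'' ⟪z, ν⟫) z ?_ (hd2 _ hlt)).sub (S.c2 (reg z hz).1 (reg z hz).2)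
    filter_upwards [eventually_gt_nhds hlt] with s hs using hd1 s hs
  set Ψ : EE n → ℝ := fun z => (c + φ ⟪z, ν⟫ + (-k) * ‖z - y‖ ^ 2) - W z with hΨ
  have hcont : ContinuousOn Ψ D := fun z hz =>
    (hasGradientAt_iff_hasFDerivAt.1 (hC2 z hz).1.self_of_nhds).continuousAt.continuousWithinAt
  have hxD : x ∈ D := ⟨hx1, hx2, hx3⟩
  obtain ⟨z, hzD, hzmax⟩ := hDc.exists_isMaxOn ⟨x, hxD⟩ hcont
  have hzpos : 0 < Ψ z := by
    have h1 : Ψ x ≤ Ψ z := hzmax hxD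
    have h2 : 0 < Ψ x := by simp only [hΨ]; linarith
    linarith
  simp only [hΨ] at hzpos
  have b2 : ⟪z, ν⟫ < hi := by
    refine lt_of_le_of_ne hzD.2.1 fun heq => ?_
    have := hhi z heq hzD.2.2
    rw [heq] at hzpos
    linarith
  have b3 : ‖z - y‖ < ρ := by
    refine lt_of_le_of_ne hzD.2.2 fun heq => ?_
    have := hside z hzD.1 hzD.2.1 heq
    rw [heq] at hzpos
    linarith
  have b1 : lo < ⟪z, ν⟫ := by
    refine lt_of_le_of_ne hzD.1 fun heq => ?_
    rcases hlo with hlo | hlo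
    · have := hlo z heq.symm hzD.2.2
      rw [← heq] at hzpos
      linarith
    · have hl : HasDerivAt (fun s : ℝ => z + s • ν) ν 0 := by
        simpa using ((hasDerivAt_id (0:ℝ)).smul_const ν).const_add z
      have hgr := hasGradientAt_iff_hasFDerivAt.1 (hC2 z hzD).1.self_of_nhds
      have hgr' : HasFDerivAt Ψ ((InnerProductSpace.toDual ℝ (EE n)) (φ' ⟪z, ν⟫ • ν + (2 * -k) • (z - y) - G z)) (z + (0:ℝ) • ν) := by
        simpa using hgr
      have hder := (hgr'.comp_hasDerivAt (0:ℝ) hl).tendsto_slope_zero_right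
      have hpos : 0 < (InnerProductSpace.toDual ℝ (EE n)) (φ' ⟪z, ν⟫ • ν + (2 * -k) • (z - y) - G z) ν := by
        rw [InnerProductSpace.toDual_apply_apply, inner_sub_left, inner_add_left, real_inner_smul_left,
          real_inner_smul_left, real_inner_self_eq_norm_sq, S.nu, ← heq]
        have g1 := S.gbd z (reg z hzD).1 (reg z hzD).2
        rw [← heq] at g1
        have g2 := real_inner_le_norm (G z) ν
        have g3 := real_inner_le_norm (z - y) ν
        rw [S.nu] at g2 g3
        have g4 : k * ⟪z - y, ν⟫ ≤ k * ρ := by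
          apply mul_le_mul_of_nonneg_left _ hk; linarith
        linarith
      have hev := hder.eventually_const_lt hpos
      have c3 : Continuous (fun s : ℝ => z + s • ν) := by fun_prop
      have t1 : ∀ᶠ s : ℝ in nhdsWithin 0 (Ioi 0), ‖z + s • ν - y‖ < ρ := by
        have := ((c2.comp c3).tendsto 0).eventually_lt_const (u := ρ) (by simpa using b3)
        exact this.filter_mono nhdsWithin_le_nhds
      have t2 : ∀ᶠ s : ℝ in nhdsWithin 0 (Ioi 0), ⟪z + s • ν, ν⟫ < hi := by
        have := ((c1.comp c3).tendsto 0).eventually_lt_const (u := hi) (by simpa using b2)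
        exact this.filter_mono nhdsWithin_le_nhds
      obtain ⟨s, u1, u2, u3, u4⟩ := (hev.and (t1.and (t2.and eventually_mem_nhdsWithin))).exists
      have u4' : 0 < s := u4
      have hin : z + s • ν ∈ D := by
        refine ⟨?_, u3.le, u2.le⟩
        rw [inner_add_left, real_inner_smul_left, real_inner_self_eq_norm_sq, S.nu]
        linarith
      have hle : Ψ (z + s • ν) ≤ Ψ z := hzmax hin
      simp only [Function.comp, zero_add, zero_smul, add_zero, smul_eq_mul] at u1
      have : 0 < Ψ (z + s • ν) - Ψ z := pos_of_mul_pos_right u1 (inv_pos.2 u4').le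
      linarith
  have hDn : D ∈ nhds z := by
    filter_upwards [(c1.tendsto z).eventually_const_lt b1, (c1.tendsto z).eventually_lt_const b2,
      (c2.tendsto z).eventually_lt_const b3] with w a b c using ⟨a.le, b.le, c.le⟩
  obtain ⟨hg, hl⟩ := (hC2 z hzD).max (hzmax.isLocalMax hDn)
  rw [lapl_sub, lapl_barrier ν S.nu] at hl
  have e1 := abs_le.1 (S.eqn z (reg z hzD).1 (reg z hzD).2)
  have hgz : G z = φ' ⟪z, ν⟫ • ν - (2 * k) • (z - y) := by
    rw [← sub_eq_zero.1 hg]; module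
  have hi2 := hInt _ b1 b2 ((2 * k) • (z - y)) (by
    rw [norm_smul, Real.norm_eq_abs, abs_of_nonneg (by positivity)]
    gcongr)
  rw [← hgz] at hi2
  linarith

set_option maxHeartbeats 1000000 in
lemma normDown {n : ℕ} {p β A : ℝ} (hp : 2 < p) (hβ : β = 1 / (p - 1)) (hA : 0 < A) {ε : ℝ}
    (hε : 0 < ε) :
    ∃ κ > 0, ∀ (ν : EE n) W G H, Sol p β A κ ν W G H → ∀ x : EE n, ∀ r : ℝ, ‖x‖ ≤ 2 → 0 ≤ r →
      1 / 2 ≤ ⟪x, ν⟫ - r → W (x - r • ν) - W x ≤ ε := by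
  have hβ0 : 0 < β := by rw [hβ]; apply one_div_pos.2; linarith
  have hβ1 : β < 1 := by rw [hβ, div_lt_one] <;> linarith
  -- choose Sg
  obtain ⟨Sg, hSg4, hSg⟩ : ∃ Sg : ℝ, 4 < Sg ∧ 16 * A * Sg ^ (-β) < ε / 3 := by
    have h1 : Tendsto (fun s : ℝ => 16 * A * s ^ (-β)) atTop (nhds 0) := by
      simpa using (tendsto_rpow_neg_atTop hβ0).const_mul (16 * A)
    obtain ⟨s, a, b⟩ := ((h1.eventually_lt_const (show 0 < ε / 3 by linarith)).and
      (eventually_gt_atTop 4)).exists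
    exact ⟨s, b, a⟩
  have hSg0 : 0 < Sg := by linarith
  set K : ℝ := 2 * A * Sg ^ (1 - β) with hK
  have hK0 : 0 < K := by positivity
  have hKS : K / Sg = 2 * A * Sg ^ (-β) := by
    rw [hK, sub_eq_add_neg, Real.rpow_add hSg0, Real.rpow_one]; field_simp
  set c0 : ℝ := 2 * (K / Sg ^ 2) with hc0
  have hc00 : 0 < c0 := by positivity
  obtain ⟨ρ, hρ1, hρ2, hρR⟩ : ∃ ρ : ℝ, 4 * K / ρ < ε / 3 ∧ (2 * n * K) / ρ < c0 / 2 ∧ 5 < ρ := by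
    obtain ⟨ρ, a, b, c⟩ := ((ev_div_lt (4 * K) (show 0 < ε / 3 by linarith)).and
      ((ev_div_lt (2 * n * K) (half_pos hc00)).and (eventually_gt_atTop 5))).exists
    exact ⟨ρ, a, b, c⟩
  have hρ0 : 1 < ρ := by linarith
  obtain ⟨κ1, hκ1, hT⟩ := tang (n := n) hp hβ hA (ε := ε / 3) (R := ρ + 4) (by linarith) (by linarith)
  set κ : ℝ := min κ1 (min (1 / 4) (min (1 / (ρ + 4 + 1)) (c0 / 4))) with hκ
  have hκ0 : 0 < κ := by
    simp only [hκ, lt_min_iff]; refine ⟨hκ1, by norm_num, by positivity, by linarith⟩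
  have hκ4 : κ ≤ 1 / 4 := (min_le_right _ _).trans (min_le_left _ _)
  have hκρ : ρ + 4 < 1 / κ := by
    have h1 : κ ≤ 1 / (ρ + 4 + 1) := (min_le_right _ _).trans ((min_le_right _ _).trans (min_le_left _ _))
    have h2 := one_div_le_one_div_of_le hκ0 h1
    rw [one_div_one_div] at h2
    linarith
  have hκc : κ ≤ c0 / 4 := (min_le_right _ _).trans ((min_le_right _ _).trans (min_le_right _ _))
  refine ⟨κ, hκ0, ?_⟩
  intro ν W G H S x r hx hr hxr
  have hT' := hT ν W G H (S.mono hκ0 (min_le_left _ _))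
  set y : EE n := x - r • ν with hy
  have hax : ⟪x, ν⟫ ≤ 2 := by
    have := real_inner_le_norm x ν; rw [S.nu] at this; linarith
  have hay : ⟪y, ν⟫ = ⟪x, ν⟫ - r := by
    rw [hy, inner_sub_left, real_inner_smul_left, real_inner_self_eq_norm_sq, S.nu]; ring
  have hr2 : r ≤ 2 := by linarith
  have hxy : ‖x - y‖ = r := by
    rw [hy, sub_sub_cancel, norm_smul, S.nu, Real.norm_eq_abs, abs_of_nonneg hr, mul_one]
  have hyn : ‖y‖ ≤ 4 := by
    have : ‖y‖ ≤ ‖x‖ + ‖r • ν‖ := norm_sub_le _ _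
    rw [norm_smul, S.nu, Real.norm_eq_abs, abs_of_nonneg hr] at this; linarith
  set lo : ℝ := ⟪y, ν⟫ with hlo
  have hlo1 : 1 / 2 ≤ lo := by rw [hay]; exact hxr
  have hlo2 : lo ≤ 2 := by rw [hay]; linarith
  set k : ℝ := K / ρ ^ 2 with hk
  have hk0 : 0 ≤ k := by positivity
  set a1 : ℝ := 4 * K / Sg with ha1
  set μ : ℝ := K / Sg ^ 2 with hμ
  have hμ0 : 0 < μ := by positivity
  have ha1μ : a1 = 4 * μ * Sg := by rw [ha1, hμ]; field_simp
  have hKμ : K = μ * Sg ^ 2 := by rw [hμ]; field_simp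
  set φ : ℝ → ℝ := fun s => μ * (s - lo) ^ 2 - a1 * (s - lo) with hφ
  set φ' : ℝ → ℝ := fun s => 2 * μ * (s - lo) - a1 with hφ'
  have hd1 : ∀ s, lo - 1 < s → HasDerivAt φ (φ' s) s := by
    intro s _
    have e := (hasDerivAt_id s).sub_const lo
    refine (((e.pow 2).const_mul μ).sub (e.const_mul a1)).congr_deriv ?_
    simp [hφ']; ring
  have hd2 : ∀ s, lo - 1 < s → HasDerivAt φ' (2 * μ) s := by
    intro s _
    have e := (hasDerivAt_id s).sub_const lo
    refine ((e.const_mul (2 * μ)).sub_const a1).congr_deriv ?_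
    simp
  have hφneg : ∀ s, lo ≤ s → s ≤ Sg → φ s ≤ 0 := by
    intro s h1 h2
    simp only [hφ, ha1μ]
    have : μ * (s - lo) ^ 2 - 4 * μ * Sg * (s - lo) = - (μ * (s - lo) * (4 * Sg - (s - lo))) := by ring
    rw [this]
    have : 0 ≤ s - lo := by linarith
    have : 0 ≤ 4 * Sg - (s - lo) := by linarith
    have : 0 ≤ μ * (s - lo) * (4 * Sg - (s - lo)) := by positivity
    linarith
  have hφhi : φ Sg ≤ - K := by
    simp only [hφ, ha1μ, hKμ]
    have h1 : Sg / 2 ≤ Sg - lo := by linarith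
    have h2 : Sg - lo ≤ Sg := by linarith
    have h3 : (Sg - lo) ^ 2 ≤ Sg ^ 2 := pow_le_pow_left₀ (by linarith) h2 2
    have h4 : 0 ≤ μ * (Sg ^ 2 - (Sg - lo) ^ 2) := mul_nonneg hμ0.le (by linarith)
    have h5 : 0 ≤ (4 * μ * Sg) * (Sg - lo - Sg / 2) := mul_nonneg (by positivity) (by linarith)
    linarith
  have hregy : ‖y‖ < 1 / κ ∧ κ < ⟪y, ν⟫ := ⟨by linarith, by linarith⟩
  have hWd : ∀ z : EE n, lo ≤ ⟪z, ν⟫ → ⟪z, ν⟫ ≤ Sg → ‖z - y‖ ≤ ρ → W y - W z ≤ K := by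
    intro z h1 h2 h3
    have h4 : ‖z‖ ≤ ‖z - y‖ + ‖y‖ := by simpa using norm_add_le (z - y) y
    have w1 := abs_le.1 (S.wbd z (by linarith) (by linarith))
    have w2 := abs_le.1 (S.wbd y hregy.1 hregy.2)
    have r1 : A * ⟪z, ν⟫ ^ (1 - β) ≤ A * Sg ^ (1 - β) := by
      have := Real.rpow_le_rpow (by linarith) h2 (show 0 ≤ 1 - β by linarith)
      gcongr
    have r2 : A * ⟪y, ν⟫ ^ (1 - β) ≤ A * Sg ^ (1 - β) := by
      have := Real.rpow_le_rpow (by linarith) (show ⟪y, ν⟫ ≤ Sg by linarith) (show 0 ≤ 1 - β by linarith)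
      gcongr
    rw [hK]; linarith
  have hkρ : k * ρ ^ 2 = K := by rw [hk]; field_simp
  have hkK : k ≤ K / ρ := by
    rw [hk]; exact div_le_div_of_nonneg_left hK0.le (by linarith) (le_self_pow₀ hρ0.le two_ne_zero)
  have main := subcomp S y ρ k (lo - 1) lo Sg (W y - ε / 3) φ φ' (fun _ => 2 * μ) (by linarith) hk0
    (by linarith) (by linarith) (by linarith) hd1 hd2 ?_ ?_ ?_ (Or.inl ?_) x (by linarith) (by linarith)
    (by rw [hxy]; linarith)
  · rw [hxy] at main
    have e1 : φ ⟪x, ν⟫ ≥ - (ε / 3) := by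
      have : ⟪x, ν⟫ - lo = r := by rw [hay]; ring
      simp only [hφ, this]
      have h1 : 0 ≤ μ * r ^ 2 := by positivity
      have h2 : a1 * r ≤ a1 * 2 := by gcongr
      have h3 : a1 * 2 = 16 * A * Sg ^ (-β) := by
        rw [ha1, mul_div_assoc, hKS]; ring
      linarith
    have e2 : k * r ^ 2 ≤ ε / 3 := by
      have h1 : r ^ 2 ≤ 2 ^ 2 := by gcongr
      calc k * r ^ 2 ≤ K / ρ * 2 ^ 2 := by gcongr
        _ = 4 * K / ρ := by ring
        _ ≤ ε / 3 := hρ1.le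
    linarith
  · intro s _ _ d _
    have h1 : 0 ≤ ‖φ' s • ν - d‖ ^ p := by positivity
    have h2 : 2 * k * n ≤ 2 * n * K / ρ := by
      calc 2 * k * n ≤ 2 * (K / ρ) * n := by gcongr
        _ = 2 * n * K / ρ := by ring
    have : c0 = 2 * μ := by rw [hc0]
    linarith
  · intro z h1 h2 h3
    have := hWd z h1 h2 h3.le
    have := hφneg _ h1 h2
    linarith
  · intro z h1 h2
    have := hWd z (by linarith) h1.le h2
    have : 0 ≤ k * ‖z - y‖ ^ 2 := by positivity
    linarith
  · intro z h1 h2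
    have h4 : ‖z‖ ≤ ‖z - y‖ + ‖y‖ := by simpa using norm_add_le (z - y) y
    have t := hT' y z (by linarith) (by linarith) h1.symm (by
      refine le_trans ?_ hlo1
      apply one_div_le_one_div_of_le <;> linarith)
    have : 0 ≤ k * ‖z - y‖ ^ 2 := by positivity
    have : φ lo = 0 := by simp [hφ]
    linarith

set_option maxHeartbeats 1000000 in
lemma normUp {n : ℕ} {p β A : ℝ} (hp : 2 < p) (hβ : β = 1 / (p - 1)) (hA : 0 < A) {ε : ℝ}
    (hε : 0 < ε) :
    ∃ θ > 0, θ ≤ 1 / 4 ∧ ∀ ε' > 0, ∃ κ > 0, ∀ (ν : EE n) W G H, Sol p β A κ ν W G H → ∀ x : EE n, ∀ r : ℝ,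
      ‖x‖ ≤ 2 → 0 ≤ r → 1 - θ ≤ ⟪x, ν⟫ → ⟪x, ν⟫ + r ≤ 1 + θ →
      W (x + r • ν) - W x ≤ (1 + ε) * β ^ β * r + ε' := by
  have hβ0 : 0 < β := by rw [hβ]; apply one_div_pos.2; linarith
  have hβ1 : β < 1 := by rw [hβ, div_lt_one] <;> linarith
  have hβp : β * (p - 1) = 1 := by rw [hβ]; field_simp [show p - 1 ≠ 0 by linarith]
  have hdp : 0 < β ^ β := by positivity
  obtain ⟨θ, hθ0, hθ4, hθ⟩ : ∃ θ : ℝ, 0 < θ ∧ θ < 1 / 4 ∧ (1 + ε / 2) * (1 - 2 * θ) ^ (-β) < 1 + ε := by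
    have h1 : Tendsto (fun θ : ℝ => (1 + ε / 2) * (1 - 2 * θ) ^ (-β)) (nhdsWithin 0 (Ioi 0)) (nhds (1 + ε / 2)) := by
      have : ContinuousAt (fun θ : ℝ => (1 + ε / 2) * (1 - 2 * θ) ^ (-β)) 0 := by
        apply continuousAt_const.mul
        apply ContinuousAt.rpow_const (by fun_prop) (Or.inl (by norm_num))
      have h2 := this.tendsto
      simp only [mul_zero, sub_zero, Real.one_rpow, mul_one] at h2
      exact h2.mono_left nhdsWithin_le_nhds
    have h2 : ∀ᶠ σ : ℝ in nhdsWithin 0 (Ioi 0), σ < 1 / 4 :=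
      (eventually_lt_nhds (by norm_num)).filter_mono nhdsWithin_le_nhds
    obtain ⟨σ, a, b, c⟩ := ((h1.eventually_lt_const (show 1 + ε / 2 < 1 + ε by linarith)).and
      (h2.and eventually_mem_nhdsWithin)).exists
    exact ⟨σ, c, b, a⟩
  refine ⟨θ, hθ0, hθ4.le, ?_⟩
  intro ε' hε'
  set e1 : ℝ := 1 + ε / 2 with he1
  have he11 : 1 < e1 := by linarith
  set q : ℝ := e1 * β ^ β with hq
  have hq0 : 0 < q := by positivity
  set ζ : ℝ := e1 ^ (-((p - 1) / 2) / p) with hζ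
  have hζ0 : 0 < ζ := by positivity
  have hζ1 : ζ < 1 := by
    apply Real.rpow_lt_one_of_one_lt_of_neg he11
    apply div_neg_of_neg_of_pos <;> linarith
  have hζp : ζ ^ p = e1 ^ (-((p - 1) / 2)) := by
    rw [hζ, ← Real.rpow_mul (by linarith)]; congr 1; field_simp
  have hqp : q ^ p = q * (e1 ^ (p - 1) * β) := by
    have : q ^ p = q * q ^ (p - 1) := by
      nth_rewrite 2 [← Real.rpow_one q]
      rw [← Real.rpow_add hq0]; congr 1; ring
    rw [this, hq, Real.mul_rpow (by linarith) (by positivity), ← Real.rpow_mul hβ0.le β, hβp, Real.rpow_one]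
  set c0 : ℝ := q ^ p * ζ ^ p - β * q with hc0
  have hc00 : 0 < c0 := by
    have h1 : e1 ^ (p - 1) * e1 ^ (-((p - 1) / 2)) = e1 ^ ((p - 1) / 2) := by
      rw [← Real.rpow_add (by linarith)]; congr 1; ring
    have h2 : 1 < e1 ^ ((p - 1) / 2) := Real.one_lt_rpow he11 (by linarith)
    have : c0 = q * β * (e1 ^ ((p - 1) / 2) - 1) := by
      rw [hc0, hqp, hζp, ← h1]; ring
    rw [this]
    have : 0 < e1 ^ ((p - 1) / 2) - 1 := by linarith
    positivity
  obtain ⟨ς, hς0, hς4, hς⟩ : ∃ ς : ℝ, 0 < ς ∧ ς < 1 / 4 ∧ A * θ ^ (-β) + 1 < q * ς ^ (-β) := by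
    have h1 : Tendsto (fun s : ℝ => q * s ^ (-β)) (nhdsWithin 0 (Ioi 0)) atTop :=
      (tendsto_rpow_neg_nhdsGT_zero (by linarith)).const_mul_atTop hq0
    have h2 : ∀ᶠ σ : ℝ in nhdsWithin 0 (Ioi 0), σ < 1 / 4 :=
      (eventually_lt_nhds (by norm_num)).filter_mono nhdsWithin_le_nhds
    obtain ⟨σ, a, b, c⟩ := ((h1.eventually_gt_atTop (A * θ ^ (-β) + 1)).and
      (h2.and eventually_mem_nhdsWithin)).exists
    exact ⟨σ, c, b, a⟩
  set K : ℝ := 4 * A with hK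
  have hK0 : 0 < K := by positivity
  set c1 : ℝ := (1 - ζ) * (q * 2 ^ (-β)) with hc1
  have hc10 : 0 < c1 := by
    have : 0 < 1 - ζ := by linarith
    positivity
  set c2 : ℝ := c0 * 2 ^ (-(1 + β)) with hc2
  have hc20 : 0 < c2 := by positivity
  obtain ⟨ρ, hρ1, hρ2, hρ3, hρ4, hρR⟩ : ∃ ρ : ℝ, 4 * K / ρ < ε' / 2 ∧ (2 * n * K) / ρ < c2 / 2 ∧
      2 * K / ρ < 1 ∧ 2 * K / ρ < c1 ∧ 5 < ρ :=
    ((ev_div_lt (4 * K) (half_pos hε')).and ((ev_div_lt (2 * n * K) (half_pos hc20)).and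
      ((ev_div_lt (2 * K) one_pos).and ((ev_div_lt (2 * K) hc10).and (eventually_gt_atTop 5))))).exists
  have hρ0 : 1 < ρ := by linarith
  obtain ⟨κ1, hκ1, hT⟩ := tang (n := n) hp hβ hA (ε := ε' / 2) (R := ρ + 4) (by linarith) (by linarith)
  set κ : ℝ := min κ1 (min (θ / 2) (min (1 / (ρ + 4 + 1)) (c2 / 4))) with hκ
  have hκ0 : 0 < κ := by
    simp only [hκ, lt_min_iff]; refine ⟨hκ1, by linarith, by positivity, by linarith⟩
  have hκ4 : κ ≤ θ / 2 := (min_le_right _ _).trans (min_le_left _ _)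
  have hκρ : ρ + 4 < 1 / κ := by
    have h1 : κ ≤ 1 / (ρ + 4 + 1) := (min_le_right _ _).trans ((min_le_right _ _).trans (min_le_left _ _))
    have h2 := one_div_le_one_div_of_le hκ0 h1
    rw [one_div_one_div] at h2
    linarith
  have hκc : κ ≤ c2 / 4 := (min_le_right _ _).trans ((min_le_right _ _).trans (min_le_right _ _))
  refine ⟨κ, hκ0, ?_⟩
  intro ν W G H S x r hx hr hxθ hxr
  have hT' := hT ν W G H (S.mono hκ0 (min_le_left _ _))
  set y : EE n := x + r • ν with hy
  have hay : ⟪y, ν⟫ = ⟪x, ν⟫ + r := by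
    rw [hy, inner_add_left, real_inner_smul_left, real_inner_self_eq_norm_sq, S.nu]; ring
  have hr2 : r ≤ 2 := by linarith
  have hxy : ‖x - y‖ = r := by
    rw [hy, sub_add_cancel_left, norm_neg, norm_smul, S.nu, Real.norm_eq_abs, abs_of_nonneg hr, mul_one]
  have hyn : ‖y‖ ≤ 4 := by
    have : ‖y‖ ≤ ‖x‖ + ‖r • ν‖ := norm_add_le _ _
    rw [norm_smul, S.nu, Real.norm_eq_abs, abs_of_nonneg hr] at this; linarith
  have hhi1 : ⟪y, ν⟫ ≤ 5 / 4 := by rw [hay]; linarith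
  have hhi0 : 3 / 4 ≤ ⟪y, ν⟫ := by rw [hay]; linarith
  set lo : ℝ := θ + ς with hlo
  set k : ℝ := K / ρ ^ 2 with hk
  have hk0 : 0 ≤ k := by positivity
  set φ : ℝ → ℝ := fun s => q / (1 - β) * (s - θ) ^ (1 - β) with hφ
  set φ' : ℝ → ℝ := fun s => q * (s - θ) ^ (-β) with hφ'
  set φ'' : ℝ → ℝ := fun s => - β * q * (s - θ) ^ (-(1 + β)) with hφ''
  have hd1 : ∀ s, θ < s → HasDerivAt φ (φ' s) s := by
    intro s hs
    have e := ((hasDerivAt_id s).sub_const θ).rpow_const (p := 1 - β) (Or.inl (by simp; linarith))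
    refine (e.const_mul (q / (1 - β))).congr_deriv ?_
    have h1 : 1 - β ≠ 0 := by linarith
    simp only [hφ', id, show 1 - β - 1 = -β by ring]
    field_simp
  have hd2 : ∀ s, θ < s → HasDerivAt φ' (φ'' s) s := by
    intro s hs
    have e := ((hasDerivAt_id s).sub_const θ).rpow_const (p := - β) (Or.inl (by simp; linarith))
    refine (e.const_mul q).congr_deriv ?_
    simp only [hφ'', id, show -β - 1 = -(1 + β) by ring]
    ring
  have hφmono : ∀ s s', θ < s → s ≤ s' → φ s ≤ φ s' := by
    intro s s' h1 h2
    have h3 : (s - θ) ^ (1 - β) ≤ (s' - θ) ^ (1 - β) :=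
      Real.rpow_le_rpow (by linarith) (by linarith) (by linarith)
    have : 0 < 1 - β := by linarith
    simp only [hφ]; gcongr
  have hregy : ‖y‖ < 1 / κ ∧ κ < ⟪y, ν⟫ := ⟨by linarith, by linarith⟩
  have hpw2 : ∀ s : ℝ, 0 < s → s ≤ 2 → A * s ^ (1 - β) ≤ 2 * A := by
    intro s h1 h2
    have h3 : s ^ (1 - β) ≤ 2 ^ (1 - β) := Real.rpow_le_rpow h1.le h2 (by linarith)
    have h4 : (2:ℝ) ^ (1 - β) ≤ 2 ^ (1:ℝ) := Real.rpow_le_rpow_of_exponent_le (by norm_num) (by linarith)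
    rw [Real.rpow_one] at h4
    have : A * s ^ (1 - β) ≤ A * 2 := by gcongr; linarith
    linarith
  have hWd : ∀ z : EE n, lo ≤ ⟪z, ν⟫ → ⟪z, ν⟫ ≤ ⟪y, ν⟫ → ‖z - y‖ ≤ ρ → W y - W z ≤ K := by
    intro z h1 h2 h3
    have h4 : ‖z‖ ≤ ‖z - y‖ + ‖y‖ := by simpa using norm_add_le (z - y) y
    have w1 := abs_le.1 (S.wbd z (by linarith) (by linarith))
    have w2 := abs_le.1 (S.wbd y hregy.1 hregy.2)
    have r1 := hpw2 ⟪z, ν⟫ (by linarith) (by linarith)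
    have r2 := hpw2 ⟪y, ν⟫ (by linarith) (by linarith)
    rw [hK]; linarith
  have hkρ : k * ρ ^ 2 = K := by rw [hk]; field_simp
  have hkρ1 : 2 * k * ρ = 2 * K / ρ := by rw [hk]; field_simp
  have hkK : k ≤ K / ρ := by
    rw [hk]; exact div_le_div_of_nonneg_left hK0.le (by linarith) (le_self_pow₀ hρ0.le two_ne_zero)
  have main := subcomp S y ρ k θ lo ⟪y, ν⟫ (W y - ε' / 2 - φ ⟪y, ν⟫) φ φ' φ'' (by linarith) hk0
    (by linarith) (by linarith) (by linarith) hd1 hd2 ?_ ?_ ?_ (Or.inr ?_) x (by linarith) (by linarith)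
    (by rw [hxy]; linarith)
  · rw [hxy] at main
    have e1' : φ ⟪y, ν⟫ - φ ⟪x, ν⟫ ≤ (1 + ε) * β ^ β * r := by
      have hmv := (convex_Icc ⟪x, ν⟫ ⟪y, ν⟫).norm_image_sub_le_of_norm_hasDerivWithin_le (f := φ)
        (f' := φ') (C := (1 + ε) * β ^ β) (x := ⟪x, ν⟫) (y := ⟪y, ν⟫)
        (fun s hs => (hd1 s (by linarith [hs.1])).hasDerivWithinAt) ?_ ⟨le_rfl, by linarith⟩ ⟨by linarith, le_rfl⟩
      · have h1 : ⟪y, ν⟫ - ⟪x, ν⟫ = r := by rw [hay]; ring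
        rw [h1, Real.norm_eq_abs, Real.norm_eq_abs, abs_of_nonneg hr] at hmv
        exact (le_abs_self _).trans hmv
      · intro s hs
        have h0 : 0 < 1 - 2 * θ := by linarith
        have h1 : (s - θ) ^ (-β) ≤ (1 - 2 * θ) ^ (-β) :=
          Real.rpow_le_rpow_of_nonpos h0 (by linarith [hs.1]) (by linarith)
        have h2 : 0 ≤ (s - θ) ^ (-β) := Real.rpow_nonneg (by linarith [hs.1]) _
        rw [Real.norm_eq_abs, abs_of_nonneg (by simp only [hφ']; positivity)]
        simp only [hφ', hq]
        calc e1 * β ^ β * (s - θ) ^ (-β) ≤ e1 * β ^ β * (1 - 2 * θ) ^ (-β) := by gcongr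
          _ = (e1 * (1 - 2 * θ) ^ (-β)) * β ^ β := by ring
          _ ≤ (1 + ε) * β ^ β := by gcongr
    have e2 : k * r ^ 2 ≤ ε' / 2 := by
      have h1 : r ^ 2 ≤ 2 ^ 2 := by gcongr
      calc k * r ^ 2 ≤ K / ρ * 2 ^ 2 := by gcongr
        _ = 4 * K / ρ := by ring
        _ ≤ ε' / 2 := hρ1.le
    linarith
  · intro s hs1 hs2 d hd
    have hs0 : 0 < s - θ := by linarith
    have hs3 : s - θ ≤ 2 := by linarith
    have h2 : 2 * k * n ≤ 2 * n * K / ρ := by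
      calc 2 * k * n ≤ 2 * (K / ρ) * n := by gcongr
        _ = 2 * n * K / ρ := by ring
    have hge : q * 2 ^ (-β) ≤ φ' s := by
      have := Real.rpow_le_rpow_of_nonpos hs0 hs3 (show -β ≤ 0 by linarith)
      simp only [hφ']; gcongr
    have hφ'0 : 0 < φ' s := by simp only [hφ']; positivity
    have hn : φ' s * ζ ≤ ‖φ' s • ν - d‖ := by
      have h3 := norm_sub_norm_le (φ' s • ν) d
      rw [norm_smul, S.nu, Real.norm_eq_abs, abs_of_pos hφ'0, mul_one] at h3
      have h4 : c1 ≤ (1 - ζ) * φ' s := by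
        rw [hc1]; exact mul_le_mul_of_nonneg_left hge (by linarith)
      linarith
    have hn2 : (φ' s * ζ) ^ p ≤ ‖φ' s • ν - d‖ ^ p :=
      Real.rpow_le_rpow (by positivity) hn (by linarith)
    have hn3 : (φ' s * ζ) ^ p = q ^ p * ζ ^ p * (s - θ) ^ (-(1 + β)) := by
      simp only [hφ']
      rw [Real.mul_rpow (by positivity) hζ0.le, Real.mul_rpow hq0.le (by positivity),
        ← Real.rpow_mul hs0.le, show -β * p = -(1 + β) by linarith]
      ring
    have hn4 : c2 ≤ c0 * (s - θ) ^ (-(1 + β)) := by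
      have := Real.rpow_le_rpow_of_nonpos hs0 hs3 (show -(1 + β) ≤ 0 by linarith)
      rw [hc2]; gcongr
    have hn5 : φ'' s + q ^ p * ζ ^ p * (s - θ) ^ (-(1 + β)) = c0 * (s - θ) ^ (-(1 + β)) := by
      simp only [hφ'', hc0]; ring
    linarith
  · intro z h1 h2 h3
    have := hWd z h1 h2 h3.le
    have := hφmono _ _ (show θ < ⟪z, ν⟫ by linarith) h2
    linarith
  · intro z h1 h2
    have h4 : ‖z‖ ≤ ‖z - y‖ + ‖y‖ := by simpa using norm_add_le (z - y) y
    have t := hT' y z (by linarith) (by linarith) h1.symm (by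
      refine le_trans ?_ (show 1 / 2 ≤ ⟪y, ν⟫ by linarith)
      apply one_div_le_one_div_of_le <;> linarith)
    have : 0 ≤ k * ‖z - y‖ ^ 2 := by positivity
    linarith
  · have h1 : A * lo ^ (-β) ≤ A * θ ^ (-β) := by
      have := Real.rpow_le_rpow_of_nonpos hθ0 (show θ ≤ lo by linarith) (show -β ≤ 0 by linarith)
      gcongr
    have h2 : φ' lo = q * ς ^ (-β) := by simp only [hφ', hlo]; congr 2; ring
    rw [h2]
    linarith

lemma refl_grad {n : ℕ} {W : EE n → ℝ} {G : EE n → EE n} {H : EE n → (EE n →L[ℝ] EE n)} {c : EE n}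
    {θ N A1 η : ℝ} (hθ : 0 < θ) (hN : 0 ≤ N) (hA1 : 0 ≤ A1) (hη : 0 ≤ η)
    (hc2 : ∀ z, ‖z - c‖ ≤ θ → C2At W G (H z) z)
    (hlap : ∀ z, ‖z - c‖ ≤ θ → |lapl (H z)| ≤ N)
    (hosc : ∀ x y, ‖x - c‖ ≤ θ → ‖y - c‖ ≤ θ → W x - W y ≤ A1 * ‖x - y‖ + η) :
    ‖G c‖ ≤ A1 + (N + n * (η / θ ^ 2) + 1) * θ / 2 := by
  by_cases hG0 : G c = 0
  · rw [hG0, norm_zero]; positivity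
  set k : ℝ := η / θ ^ 2 with hk
  have hk0 : 0 ≤ k := by positivity
  set N' : ℝ := N + n * k + 1 with hN'
  have hN'0 : 0 ≤ N' := by positivity
  have hgn : 0 < ‖G c‖ := norm_pos_iff.2 hG0
  set e : EE n := (1 / ‖G c‖) • G c with he
  have he1 : ‖e‖ = 1 := by
    rw [he, norm_smul, Real.norm_eq_abs, abs_of_pos (by positivity)]; field_simp
  have hee : ⟪e, e⟫ = (1:ℝ) := by rw [real_inner_self_eq_norm_sq, he1]; norm_num
  have hGe : ⟪G c, e⟫ = ‖G c‖ := by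
    rw [he, real_inner_smul_right, real_inner_self_eq_norm_sq]; field_simp
  set S : EE n ≃ₗᵢ[ℝ] EE n := Submodule.reflection (ℝ ∙ e)ᗮ with hS
  have hSz : ∀ z, S z = z - (2 * ⟪z, e⟫) • e := by
    intro z
    rw [hS, Submodule.reflection_orthogonal_apply, Submodule.reflection_singleton_apply, he1]
    simp [real_inner_comm, two_smul, add_smul, two_mul]
  set Q : EE n → ℝ := fun z => 0 + (fun s : ℝ => (2 * A1 + N' * θ) * s - N' * s ^ 2) ⟪z, e⟫ + k * ‖z - 0‖ ^ 2 with hQ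
  have hQc2 : ∀ x, C2At Q (fun z => (fun s : ℝ => (2 * A1 + N' * θ) - N' * (2 * s)) ⟪z, e⟫ • e + (2 * k) • (z - 0))
      ((-(2 * N')) • ((innerSL ℝ e).smulRight e) + (2 * k) • ContinuousLinearMap.id ℝ (EE n)) x := by
    intro x
    rw [hQ]
    apply C2At.barrier e 0 k 0 (fun s : ℝ => (2 * A1 + N' * θ) * s - N' * s ^ 2)
      (fun s : ℝ => (2 * A1 + N' * θ) - N' * (2 * s)) (-(2 * N')) x
    · apply Eventually.of_forall
      intro s
      have := ((hasDerivAt_id s).const_mul (2 * A1 + N' * θ)).sub (((hasDerivAt_id s).pow 2).const_mul N')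
      refine this.congr_deriv ?_
      simp
    · have := (((hasDerivAt_id ⟪x, e⟫).const_mul 2).const_mul N').const_sub (2 * A1 + N' * θ)
      refine this.congr_deriv ?_
      ring
  set F : EE n → ℝ := fun z => W (z + c) - W (S z + c) - Q z with hF
  set Dm : Set (EE n) := {z | 0 ≤ ⟪z, e⟫} ∩ closedBall 0 θ with hDm
  have hDc : IsCompact Dm := by
    apply (isCompact_closedBall 0 θ).inter_left
    exact isClosed_le continuous_const (by fun_prop)
  have hFc2 : ∀ x : EE n, ‖x‖ ≤ θ → ∃ g h, C2At F g h x ∧ -(2 * N) + 2 * N' - 2 * k * n ≤ lapl h := by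
    intro x hx
    have hx1 : ‖x + c - c‖ ≤ θ := by simpa using hx
    have hx2 : ‖S x + c - c‖ ≤ θ := by simpa using hx
    have a1 := (hc2 _ hx1).trans
    obtain ⟨h', a2, a3⟩ := C2At.isom S (hc2 _ hx2).trans
    refine ⟨_, _, (a1.sub a2).sub (hQc2 x), ?_⟩
    rw [lapl_sub, lapl_sub, lapl_barrier e he1, a3]
    have b1 := abs_le.1 (hlap _ hx1)
    have b2 := abs_le.1 (hlap _ hx2)
    linarith
  have hFcont : ContinuousOn F Dm := by
    intro x hx
    have : ‖x‖ ≤ θ := by simpa using hx.2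
    obtain ⟨g, h, h1, h2⟩ := hFc2 x this
    exact (hasGradientAt_iff_hasFDerivAt.1 h1.1.self_of_nhds).continuousAt.continuousWithinAt
  have hF0 : F 0 = 0 := by simp [hF, hQ]
  have hle : ∀ z ∈ Dm, F z ≤ 0 := by
    obtain ⟨z0, hz0, hmax⟩ := hDc.exists_isMaxOn ⟨0, by simp [hDm, hθ.le]⟩ hFcont
    suffices h : F z0 ≤ 0 from fun z hz => (hmax hz).trans h
    by_contra hpos
    push Not at hpos
    have hz0n : ‖z0‖ ≤ θ := by simpa using hz0.2
    have hz0e : 0 ≤ ⟪z0, e⟫ := hz0.1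
    have hz0e2 : ⟪z0, e⟫ ≤ θ := by
      have := real_inner_le_norm z0 e
      rw [he1] at this; linarith
    have p1 : 0 < ⟪z0, e⟫ := by
      rcases hz0e.lt_or_eq with h | h
      · exact h
      · exfalso
        have : F z0 = -(k * ‖z0‖ ^ 2) := by
          simp [hF, hQ, hSz, ← h]
        have : 0 ≤ k * ‖z0‖ ^ 2 := by positivity
        linarith
    have p2 : ‖z0‖ < θ := by
      rcases hz0n.lt_or_eq with h | h
      · exact h
      · exfalso
        have o := hosc (z0 + c) (S z0 + c) (by simpa using hz0n) (by simpa using hz0n)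
        have o1 : z0 + c - (S z0 + c) = (2 * ⟪z0, e⟫) • e := by rw [hSz]; abel
        rw [o1, norm_smul, he1, Real.norm_eq_abs, abs_of_nonneg (by linarith)] at o
        have o2 : k * ‖z0‖ ^ 2 = η := by rw [h, hk]; field_simp
        have o3 : N' * ⟪z0, e⟫ * ⟪z0, e⟫ ≤ N' * ⟪z0, e⟫ * θ := by gcongr
        simp only [hF, hQ, sub_zero] at hpos
        rw [o2] at hpos
        linarith
    obtain ⟨g, h, h1, h2⟩ := hFc2 z0 hz0n
    have hloc : IsLocalMax F z0 := by
      apply hmax.isLocalMax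
      have u1 : ∀ᶠ y : EE n in nhds z0, ‖y‖ < θ := (continuous_norm.tendsto z0).eventually_lt_const p2
      have u2 : ∀ᶠ y : EE n in nhds z0, 0 < ⟪y, e⟫ := by
        have : Continuous (fun y : EE n => ⟪y, e⟫) := by fun_prop
        exact (this.tendsto z0).eventually_const_lt p1
      filter_upwards [u1, u2] with y y1 y2
      exact ⟨y2.le, by simpa using y1.le⟩
    have := (h1.max hloc).2
    linarith
  -- derivative at zero
  have hl : HasDerivAt (fun s : ℝ => s • e + c) e 0 := by
    simpa using ((hasDerivAt_id (0:ℝ)).smul_const e).add_const c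
  have hl2 : HasDerivAt (fun s : ℝ => S (s • e) + c) (-e) 0 := by
    have : ∀ s : ℝ, S (s • e) = s • (-e) := by
      intro s
      rw [hSz, real_inner_smul_left, hee]
      module
    simp only [this]
    simpa using ((hasDerivAt_id (0:ℝ)).smul_const (-e)).add_const c
  have hgc := hasGradientAt_iff_hasFDerivAt.1 (hc2 c (by simpa using hθ.le)).1.self_of_nhds
  have d1 : HasDerivAt (fun s : ℝ => W (s • e + c)) ‖G c‖ 0 := by
    have := HasFDerivAt.comp_hasDerivAt (x := (0:ℝ)) (l := W) (f := fun s : ℝ => s • e + c) (l' := InnerProductSpace.toDual ℝ (EE n) (G c)) (by simpa using hgc) hl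
    refine this.congr_deriv ?_
    simp [hGe]
  have d2 : HasDerivAt (fun s : ℝ => W (S (s • e) + c)) (-‖G c‖) 0 := by
    have := HasFDerivAt.comp_hasDerivAt (x := (0:ℝ)) (l := W) (f := fun s : ℝ => S (s • e) + c) (l' := InnerProductSpace.toDual ℝ (EE n) (G c)) (by simpa using hgc) hl2
    refine this.congr_deriv ?_
    simp [hGe]
  have d3 : HasDerivAt (fun s : ℝ => (2 * A1 + N' * θ) * s + (k - N') * s ^ 2) (2 * A1 + N' * θ) 0 := by
    have := ((hasDerivAt_id (0:ℝ)).const_mul (2 * A1 + N' * θ)).add (((hasDerivAt_id (0:ℝ)).pow 2).const_mul (k - N'))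
    refine this.congr_deriv ?_
    simp
  have d := (d1.sub d2).sub d3
  have hfeq : ∀ s : ℝ, F (s • e) = W (s • e + c) - W (S (s • e) + c) - ((2 * A1 + N' * θ) * s + (k - N') * s ^ 2) := by
    intro s
    simp only [hF, hQ, sub_zero, real_inner_smul_left, hee, norm_smul, he1, Real.norm_eq_abs, mul_one, sq_abs]
    ring
  have hsl := (hasDerivAt_iff_tendsto_slope.1 d).mono_left (nhdsWithin_mono (0:ℝ) (show Ioi (0:ℝ) ⊆ {0}ᶜ from fun s hs => (ne_of_gt hs)))
  have : ‖G c‖ - -‖G c‖ - (2 * A1 + N' * θ) ≤ 0 := by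
    apply le_of_tendsto hsl
    have w : ∀ᶠ s : ℝ in nhdsWithin 0 (Ioi 0), s < θ :=
      (eventually_lt_nhds hθ).filter_mono nhdsWithin_le_nhds
    filter_upwards [w, self_mem_nhdsWithin] with s h1 h2
    have h2' : (0:ℝ) < s := h2
    have f1 := hle (s • e) ⟨by rw [mem_ofPred_eq, real_inner_smul_left, hee]; linarith, by
      simp [norm_smul, he1, abs_of_pos h2', h1.le]⟩
    rw [hfeq] at f1
    rw [slope_def_field]
    apply div_nonpos_of_nonpos_of_nonneg
    · simp at f1 ⊢; linarith
    · linarith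
  linarith

set_option maxHeartbeats 1000000 in
lemma thmE {n : ℕ} {p β A : ℝ} (hp : 2 < p) (hβ : β = 1 / (p - 1)) (hA : 0 < A) {ε : ℝ}
    (hε : 0 < ε) :
    ∃ κ > 0, ∀ (ν : EE n) W G H, Sol p β A κ ν W G H → ‖G ν‖ ≤ (1 + ε) * β ^ β := by
  have hβ0 : 0 < β := by rw [hβ]; apply one_div_pos.2; linarith
  have hβ1 : β < 1 := by rw [hβ, div_lt_one] <;> linarith
  have hdp : 0 < β ^ β := by positivity
  obtain ⟨θ1, hθ1, hθ14, hup⟩ := normUp (n := n) hp hβ hA (half_pos hε)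
  set A1 : ℝ := (1 + ε / 2) * β ^ β with hA1
  have hA10 : 0 < A1 := by positivity
  set B : ℝ := A * (1/2:ℝ) ^ (-β) with hB
  have hB0 : 0 < B := by positivity
  set N : ℝ := B ^ p + 1 with hN
  have hN0 : 0 < N := by positivity
  -- choose θ
  set θ : ℝ := min θ1 (ε * β ^ β / (2 * (N + 2))) with hθ
  have hθ0 : 0 < θ := by positivity
  have hθ4 : θ ≤ 1 / 4 := (min_le_left _ _).trans hθ14
  have hθN : (N + 2) * θ ≤ ε * β ^ β / 2 := by
    have := mul_le_mul_of_nonneg_left (min_le_right θ1 (ε * β ^ β / (2 * (N + 2)))) (show 0 ≤ N + 2 by linarith)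
    refine this.trans (le_of_eq ?_)
    field_simp
  have hθle : θ ≤ θ1 := min_le_left _ _
  clear_value θ N
  set η : ℝ := θ ^ 2 / (n + 1) with hη
  have hη0 : 0 < η := by positivity
  obtain ⟨κ1, hκ1, hT⟩ := tang (n := n) hp hβ hA (half_pos hη0) (show (1:ℝ) ≤ 3 by norm_num)
  obtain ⟨κ2, hκ2, hU⟩ := hup (η / 2) (half_pos hη0)
  obtain ⟨κ3, hκ3, hD⟩ := normDown (n := n) hp hβ hA (half_pos hη0)
  set κ : ℝ := min (min κ1 κ2) (min κ3 (1/8)) with hκ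
  have hκ0 : 0 < κ := by positivity
  have k1 : κ ≤ κ1 := (min_le_left _ _).trans (min_le_left _ _)
  have k2 : κ ≤ κ2 := (min_le_left _ _).trans (min_le_right _ _)
  have k3 : κ ≤ κ3 := (min_le_right _ _).trans (min_le_left _ _)
  have k4 : κ ≤ 1/8 := (min_le_right _ _).trans (min_le_right _ _)
  have k5 : 8 ≤ 1 / κ := by rw [le_div_iff₀ hκ0]; linarith
  clear_value κ
  refine ⟨κ, hκ0, ?_⟩
  intro ν W G H S
  replace hT := hT ν W G H (S.mono hκ0 k1)
  replace hU := hU ν W G H (S.mono hκ0 k2)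
  replace hD := hD ν W G H (S.mono hκ0 k3)
  have hνν : ⟪ν, ν⟫ = (1:ℝ) := by rw [real_inner_self_eq_norm_sq, S.nu]; norm_num
  have hb : ∀ z, ‖z - ν‖ ≤ θ → ‖z‖ ≤ 5/4 ∧ |⟪z, ν⟫ - 1| ≤ θ := by
    intro z hz
    constructor
    · have := norm_add_le (z - ν) ν
      rw [sub_add_cancel, S.nu] at this
      linarith
    · have := abs_real_inner_le_norm (z - ν) ν
      rw [inner_sub_left, hνν, S.nu, mul_one] at this
      linarith
  have hreg : ∀ z, ‖z - ν‖ ≤ θ → ‖z‖ < 1 / κ ∧ κ < ⟪z, ν⟫ := by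
    intro z hz
    have := (hb z hz).1
    have h2 := abs_le.1 (hb z hz).2
    constructor <;> linarith
  have key := refl_grad (W := W) (G := G) (H := H) (c := ν) hθ0 hN0.le hA10.le hη0.le
    (fun z hz => S.c2 (hreg z hz).1 (hreg z hz).2) ?_ ?_
  · refine key.trans ?_
    have : (n:ℝ) * (η / θ ^ 2) ≤ 1 := by
      rw [hη]
      have : θ ^ 2 / (n + 1) / θ ^ 2 = 1 / ((n:ℝ) + 1) := by field_simp
      rw [this, mul_one_div, div_le_one (by positivity)]
      linarith
    have : (N + n * (η / θ ^ 2) + 1) * θ ≤ (N + 2) * θ := by apply mul_le_mul_of_nonneg_right _ hθ0.le; linarith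
    have : 0 < ε * β ^ β := by positivity
    rw [hA1]
    linarith
  · intro z hz
    have h1 := abs_le.1 (S.eqn z (hreg z hz).1 (hreg z hz).2)
    have h2 := S.gbd z (hreg z hz).1 (hreg z hz).2
    have h3 := abs_le.1 (hb z hz).2
    have h4 : ‖G z‖ ≤ B := by
      refine h2.trans ?_
      have := Real.rpow_le_rpow_of_nonpos (show (0:ℝ) < 1/2 by norm_num) (show 1/2 ≤ ⟪z, ν⟫ by linarith) (show -β ≤ 0 by linarith)
      rw [hB]; gcongr
    have h5 : ‖G z‖ ^ p ≤ B ^ p := Real.rpow_le_rpow (norm_nonneg _) h4 (by linarith)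
    have h6 : 0 ≤ ‖G z‖ ^ p := by positivity
    rw [abs_le, hN]
    constructor <;> linarith
  · intro x y hx hy
    have hx1 := hb x hx
    have hy1 := hb y hy
    have hx2 := abs_le.1 hx1.2
    have hy2 := abs_le.1 hy1.2
    set r : ℝ := ⟪x, ν⟫ - ⟪y, ν⟫ with hr
    have hrle : |r| ≤ ‖x - y‖ := by
      have := abs_real_inner_le_norm (x - y) ν
      rw [inner_sub_left, S.nu, mul_one] at this
      exact this
    have hrle2 : |r| ≤ 1/2 := by rw [abs_le, hr]; constructor <;> linarith
    have t := hT x (y + r • ν) (by linarith) (by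
        have := norm_add_le y (r • ν)
        rw [norm_smul, S.nu, Real.norm_eq_abs] at this
        linarith) (by rw [inner_add_left, real_inner_smul_left, hνν, hr]; ring) (by linarith)
    rcases le_total 0 r with h | h
    · have := hU y r (by linarith) h (by linarith [hθle])
        (by linarith [hθle])
      have h3 : A1 * r ≤ A1 * ‖x - y‖ := by
        apply mul_le_mul_of_nonneg_left _ hA10.le
        exact (le_abs_self r).trans hrle
      linarith
    · have := hD y (-r) (by linarith) (by linarith) (by linarith)
      rw [neg_smul, sub_neg_eq_add] at this
      have h3 : 0 ≤ A1 * ‖x - y‖ := by positivity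
      linarith

lemma ball_sub_of_dist {n : ℕ} {Ω : Set (EE n)} (hΩo : IsOpen Ω) {c : EE n} {r : ℝ} (hr : 0 < r)
    (hc : c ∈ Ω) (hd : r ≤ infDist c (frontier Ω)) : ball c r ⊆ Ω := by
  apply (convex_ball c r).isPreconnected.subset_of_closure_inter_subset hΩo ⟨c, mem_ball_self hr, hc⟩
  rintro z ⟨h1, h2⟩
  by_contra h3
  have h4 : z ∈ frontier Ω := by rw [frontier, hΩo.interior_eq]; exact ⟨h1, h3⟩
  have h5 := infDist_le_dist_of_mem (x := c) h4
  rw [mem_ball, dist_comm] at h2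
  linarith

lemma frontier_ne {n : ℕ} (hn : 1 ≤ n) {Ω : Set (EE n)} (hΩb : Bornology.IsBounded Ω) {x : EE n} (hx : x ∈ Ω) :
    (frontier Ω).Nonempty := by
  rw [nonempty_frontier_iff]
  refine ⟨⟨x, hx⟩, ?_⟩
  rintro rfl
  have : NeZero n := ⟨by omega⟩
  exact NormedSpace.unbounded_univ ℝ (EE n) hΩb

lemma fdist_pos {n : ℕ} {Ω : Set (EE n)} (hΩo : IsOpen Ω) (hne : (frontier Ω).Nonempty)
    {x : EE n} (hx : x ∈ Ω) : 0 < infDist x (frontier Ω) := by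
  apply (isClosed_frontier.notMem_iff_infDist_pos hne).1
  intro h
  rw [frontier, hΩo.interior_eq] at h
  exact h.2 hx

/-- interior ball and lower bound for the distance -/
lemma geo_low {n : ℕ} {Ω : Set (EE n)} (hΩo : IsOpen Ω) {b ν : EE n} {r : ℝ} (hr : 0 < r)
    (hν : ‖ν‖ = 1) (hin : b + r • ν ∈ Ω) (hd : infDist (b + r • ν) (frontier Ω) = r) {z : EE n}
    (hz : ‖z - b‖ ^ 2 < 2 * r * ⟪z - b, ν⟫) :
    z ∈ Ω ∧ ⟪z - b, ν⟫ - ‖z - b‖ ^ 2 / (2 * r) ≤ infDist z (frontier Ω) := by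
  have e1 : ‖z - (b + r • ν)‖ ^ 2 = ‖z - b‖ ^ 2 - 2 * r * ⟪z - b, ν⟫ + r ^ 2 := by
    rw [← sub_sub, norm_sub_sq_real, real_inner_smul_right, norm_smul, hν, Real.norm_eq_abs, mul_one, sq_abs]
    ring
  set a : ℝ := ⟪z - b, ν⟫ with ha
  set m : ℝ := ‖z - b‖ ^ 2 with hm
  have hm0 : 0 ≤ ‖z - (b + r • ν)‖ ^ 2 := by positivity
  have e2 : ‖z - (b + r • ν)‖ < r := by
    apply lt_of_pow_lt_pow_left₀ 2 hr.le
    linarith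
  have e3 : ‖z - (b + r • ν)‖ ≤ r - (a - m / (2 * r)) := by
    have h1 : a - m / (2 * r) = (2 * r * a - m) / (2 * r) := by field_simp
    have h2 : 0 ≤ r - (a - m / (2 * r)) := by
      rw [h1, sub_nonneg, div_le_iff₀ (by positivity)]
      nlinarith
    refine (pow_le_pow_iff_left₀ (norm_nonneg _) h2 two_ne_zero).1 ?_
    rw [e1]
    have h3 : r * (a - m / (2 * r)) = (2 * r * a - m) / 2 := by rw [h1]; field_simp
    nlinarith [sq_nonneg (a - m / (2 * r))]
  constructor
  · exact ball_sub_of_dist hΩo hr hin hd.ge (by rw [mem_ball, dist_eq_norm]; exact e2)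
  · have := infDist_le_infDist_add_dist (s := frontier Ω) (x := b + r • ν) (y := z)
    rw [hd, dist_comm, dist_eq_norm] at this
    linarith

/-- a point is reached from its projection along the normal -/
lemma geo_proj {n : ℕ} {Ω : Set (EE n)} {z y ν : EE n} (hy : y ∈ frontier Ω)
    (hd : dist z y = infDist z (frontier Ω)) (hpos : 0 < infDist z (frontier Ω)) (hν : ‖ν‖ = 1)
    (hg : HasGradientAt (fun x => infDist x (frontier Ω)) ν z) :
    z = y + infDist z (frontier Ω) • ν := by
  set d : ℝ := infDist z (frontier Ω) with hdd
  set e : EE n := (1 / d) • (z - y) with he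
  have hzy : ‖z - y‖ = d := by rw [← dist_eq_norm]; exact hd
  have he1 : ‖e‖ = 1 := by
    rw [he, norm_smul, hzy, Real.norm_eq_abs, abs_of_pos (by positivity)]; field_simp
  have hde : d • e = z - y := by rw [he, smul_smul, mul_one_div_cancel hpos.ne', one_smul]
  have hs : ∀ s ∈ Icc 0 d, infDist (z - s • e) (frontier Ω) = d - s := by
    intro s hs
    apply le_antisymm
    · refine (infDist_le_dist_of_mem hy).trans ?_
      have : z - s • e - y = (d - s) • e := by rw [sub_smul, hde]; abel
      rw [dist_eq_norm, this, norm_smul, he1, mul_one, Real.norm_eq_abs, abs_of_nonneg (by linarith [hs.2])]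
    · have := infDist_le_infDist_add_dist (s := frontier Ω) (x := z) (y := z - s • e)
      rw [dist_eq_norm, sub_sub_cancel, norm_smul, he1, mul_one, Real.norm_eq_abs, abs_of_nonneg hs.1] at this
      linarith
  have hl : HasDerivAt (fun s : ℝ => z - s • e) (-e) 0 := by
    simpa using ((hasDerivAt_id (0:ℝ)).smul_const e).const_sub z
  have d1 : HasDerivAt (fun s : ℝ => infDist (z - s • e) (frontier Ω)) (-⟪ν, e⟫) 0 := by
    have := HasFDerivAt.comp_hasDerivAt (x := (0:ℝ)) (l := fun x => infDist x (frontier Ω))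
      (f := fun s : ℝ => z - s • e) (l' := InnerProductSpace.toDual ℝ (EE n) ν) (by simpa using hasGradientAt_iff_hasFDerivAt.1 hg) hl
    refine this.congr_deriv ?_
    simp
  have d2 : HasDerivWithinAt (fun s : ℝ => infDist (z - s • e) (frontier Ω)) (-1) (Icc 0 d) 0 := by
    have : HasDerivWithinAt (fun s : ℝ => d - s) (-1) (Icc 0 d) 0 := by
      simpa using ((hasDerivAt_id (0:ℝ)).const_sub d).hasDerivWithinAt
    exact this.congr hs (hs 0 ⟨le_rfl, hpos.le⟩)
  have hu := (uniqueDiffOn_Icc hpos 0 ⟨le_rfl, hpos.le⟩).eq_deriv _ d1.hasDerivWithinAt d2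
  have : ⟪ν, e⟫ = (1:ℝ) := by linarith
  rw [inner_eq_one_iff_of_norm_eq_one hν he1] at this
  rw [this, hde]; abel

lemma geo_nu {n : ℕ} {Ω : Set (EE n)} (hΩb : Bornology.IsBounded Ω) (ν : EE n → EE n) {r : ℝ} (hr : 0 < r)
    (h1 : ∀ b ∈ frontier Ω, ‖ν b‖ = 1 ∧ b + r • ν b ∈ closure Ω ∧ infDist (b + r • ν b) (frontier Ω) = r)
    (h2 : ∀ b ∈ frontier Ω, ∀ e : EE n, ‖e‖ = 1 → b + r • e ∈ closure Ω → infDist (b + r • e) (frontier Ω) = r → e = ν b) :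
    ∀ η > 0, ∃ ρ > 0, ∀ b ∈ frontier Ω, ∀ b' ∈ frontier Ω, ‖b - b'‖ < ρ → ‖ν b - ν b'‖ < η := by
  intro η hη
  have hfc : IsCompact (frontier Ω) :=
    isCompact_of_isClosed_isBounded isClosed_frontier (hΩb.closure.subset frontier_subset_closure)
  set K : Set (EE n × EE n) := (frontier Ω ×ˢ sphere (0 : EE n) 1) ∩
    {q | q.1 + r • q.2 ∈ closure Ω} ∩ {q | infDist (q.1 + r • q.2) (frontier Ω) = r} with hK
  have hcl : Continuous (fun q : EE n × EE n => q.1 + r • q.2) := by fun_prop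
  have hKc : IsCompact K := by
    apply IsCompact.inter_right
    · apply IsCompact.inter_right
      · exact hfc.prod (isCompact_sphere _ _)
      · exact isClosed_closure.preimage hcl
    · exact isClosed_eq ((continuous_infDist_pt _).comp hcl) continuous_const
  have hKg : ∀ q ∈ K, q.2 = ν q.1 := by
    rintro ⟨b, e⟩ ⟨⟨⟨a1, a2⟩, a3⟩, a4⟩
    exact h2 b a1 e (by simpa using a2) a3 a4
  set K2 : Set ((EE n × EE n) × (EE n × EE n)) := (K ×ˢ K) ∩ {q | η ≤ ‖q.1.2 - q.2.2‖} with hK2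
  have hK2c : IsCompact K2 := by
    apply (hKc.prod hKc).inter_right
    exact isClosed_le continuous_const (by fun_prop)
  have hmem : ∀ b ∈ frontier Ω, (b, ν b) ∈ K := by
    intro b hb
    obtain ⟨a1, a2, a3⟩ := h1 b hb
    exact ⟨⟨⟨hb, by simpa using a1⟩, a2⟩, a3⟩
  rcases K2.eq_empty_or_nonempty with h0 | h0
  · refine ⟨1, one_pos, ?_⟩
    intro b hb b' hb' _
    by_contra hc
    push Not at hc
    have : ((b, ν b), (b', ν b')) ∈ K2 := ⟨⟨hmem b hb, hmem b' hb'⟩, hc⟩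
    rw [h0] at this
    exact this
  · obtain ⟨q, hq, hmin⟩ := hK2c.exists_isMinOn h0 (f := fun q => ‖q.1.1 - q.2.1‖) (by fun_prop)
    refine ⟨‖q.1.1 - q.2.1‖, ?_, ?_⟩
    · rw [gt_iff_lt, norm_pos_iff, sub_ne_zero]
      intro h
      have : q.1.2 = q.2.2 := by rw [hKg _ hq.1.1, hKg _ hq.1.2, h]
      have h3 : η ≤ ‖q.1.2 - q.2.2‖ := hq.2
      rw [this, sub_self, norm_zero] at h3
      linarith
    · intro b hb b' hb' h
      by_contra hc
      push Not at hc
      have : ((b, ν b), (b', ν b')) ∈ K2 := ⟨⟨hmem b hb, hmem b' hb'⟩, hc⟩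
      have h3 := isMinOn_iff.1 hmin _ this
      exact absurd h (not_lt.2 h3)

lemma seg_le {f f' : ℝ → ℝ} {d A C β : ℝ} (hβ : β < 1) (hd : 0 ≤ d) (hc : ContinuousOn f (Icc 0 d))
    (hf : ∀ s ∈ Ioo 0 d, HasDerivAt f (f' s) s) (hb : ∀ s ∈ Ioo 0 d, f' s ≤ A * s ^ (-β) + C)
    (h0 : f 0 = 0) : f d ≤ A / (1 - β) * d ^ (1 - β) + C * d := by
  have h1 : 0 < 1 - β := by linarith
  have key : MonotoneOn (fun s => A / (1 - β) * s ^ (1 - β) + C * s - f s) (Icc 0 d) := by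
    have hder : ∀ s ∈ Ioo 0 d, HasDerivAt (fun s => A / (1 - β) * s ^ (1 - β) + C * s - f s)
        (A * s ^ (-β) + C - f' s) s := by
      intro s hs
      have a1 := (Real.hasDerivAt_rpow_const (x := s) (p := 1 - β) (Or.inl hs.1.ne')).const_mul (A / (1 - β))
      have := (a1.add ((hasDerivAt_id s).const_mul C)).sub (hf s hs)
      refine this.congr_deriv ?_
      rw [show 1 - β - 1 = -β by ring]
      field_simp
    apply monotoneOn_of_deriv_nonneg (convex_Icc 0 d)
    · apply ContinuousOn.sub _ hc
      apply ContinuousOn.add _ (by fun_prop)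
      apply ContinuousOn.mul continuousOn_const
      exact (Real.continuous_rpow_const h1.le).continuousOn
    · rw [interior_Icc]
      intro s hs
      exact (hder s hs).differentiableAt.differentiableWithinAt
    · rw [interior_Icc]
      intro s hs
      rw [(hder s hs).deriv]
      linarith [hb s hs]
  have := key ⟨le_rfl, hd⟩ ⟨hd, le_rfl⟩ hd
  simp only [h0, Real.zero_rpow h1.ne'] at this
  linarith

/-- integration along the segment to the nearest boundary point -/
lemma seg_u {n : ℕ} {Ω : Set (EE n)} (hΩo : IsOpen Ω) (hne : (frontier Ω).Nonempty)
    {v : EE n → ℝ} {g : EE n → EE n} {A C β : ℝ} (hβ : β < 1)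
    (hv : ContinuousOn v (closure Ω)) (hv0 : ∀ b ∈ frontier Ω, v b = 0)
    (hg : ∀ x ∈ Ω, HasGradientAt v (g x) x)
    (hb : ∀ x ∈ Ω, ‖g x‖ ≤ A * (infDist x (frontier Ω)) ^ (-β) + C) {x : EE n} (hx : x ∈ Ω) :
    |v x| ≤ A / (1 - β) * (infDist x (frontier Ω)) ^ (1 - β) + C * infDist x (frontier Ω) := by
  obtain ⟨b, hbf, hbd⟩ := isClosed_frontier.exists_infDist_eq_dist hne x
  have hpos := fdist_pos hΩo hne hx
  set d : ℝ := infDist x (frontier Ω) with hd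
  set e : EE n := (1 / d) • (x - b) with he
  have hzy : ‖x - b‖ = d := by rw [← dist_eq_norm]; exact hbd.symm
  have he1 : ‖e‖ = 1 := by
    rw [he, norm_smul, hzy, Real.norm_eq_abs, abs_of_pos (by positivity)]; field_simp
  have hde : d • e = x - b := by rw [he, smul_smul, mul_one_div_cancel hpos.ne', one_smul]
  have hxb : b + d • e = x := by rw [hde]; abel
  have hnd : ∀ s ∈ Icc 0 d, dist x (b + s • e) = d - s := by
    intro s hs
    have : x - (b + s • e) = (d - s) • e := by rw [sub_smul, hde]; abel
    rw [dist_eq_norm, this, norm_smul, he1, mul_one, Real.norm_eq_abs, abs_of_nonneg (by linarith [hs.2])]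
  have hin : ∀ s ∈ Ioc 0 d, b + s • e ∈ Ω := by
    intro s hs
    apply ball_sub_of_dist hΩo hpos hx hd.le
    rw [mem_ball, dist_comm, hnd s ⟨hs.1.le, hs.2⟩]
    linarith [hs.1]
  have hs : ∀ s ∈ Icc 0 d, infDist (b + s • e) (frontier Ω) = s := by
    intro s hs
    apply le_antisymm
    · refine (infDist_le_dist_of_mem hbf).trans ?_
      rw [dist_eq_norm, add_sub_cancel_left, norm_smul, he1, mul_one, Real.norm_eq_abs, abs_of_nonneg hs.1]
    · have := infDist_le_infDist_add_dist (s := frontier Ω) (x := x) (y := b + s • e)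
      rw [hnd s hs] at this
      linarith
  have hl : ∀ s, HasDerivAt (fun s : ℝ => b + s • e) e s := by
    intro s
    simpa using ((hasDerivAt_id s).smul_const e).const_add b
  have hder : ∀ s ∈ Ioo 0 d, HasDerivAt (fun s : ℝ => v (b + s • e)) ⟪g (b + s • e), e⟫ s := by
    intro s hs
    have := HasFDerivAt.comp_hasDerivAt (x := s) (l := v) (f := fun s : ℝ => b + s • e)
      (hasGradientAt_iff_hasFDerivAt.1 (hg _ (hin s ⟨hs.1, hs.2.le⟩))) (hl s)
    refine this.congr_deriv ?_
    simp
  have hcont : ContinuousOn (fun s : ℝ => v (b + s • e)) (Icc 0 d) := by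
    apply hv.comp (by fun_prop)
    intro s hs
    rcases hs.1.lt_or_eq with h | h
    · exact subset_closure (hin s ⟨h, hs.2⟩)
    · rw [← h]; simpa using frontier_subset_closure hbf
  have hbd2 : ∀ s ∈ Ioo 0 d, |⟪g (b + s • e), e⟫| ≤ A * s ^ (-β) + C := by
    intro s hs'
    have h1 := abs_real_inner_le_norm (g (b + s • e)) e
    have h2 := hb _ (hin s ⟨hs'.1, hs'.2.le⟩)
    rw [hs s ⟨hs'.1.le, hs'.2.le⟩] at h2
    rw [he1, mul_one] at h1
    linarith
  rw [abs_le']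
  constructor
  · have := seg_le hβ hpos.le hcont hder (fun s hs => (le_abs_self _).trans (hbd2 s hs)) (by simpa using hv0 b hbf)
    simpa only [hxb] using this
  · have := seg_le hβ hpos.le hcont.neg (fun s hs => (hder s hs).neg) (fun s hs => (neg_le_abs _).trans (hbd2 s hs)) (by simpa using hv0 b hbf)
    simpa only [hxb, Pi.neg_apply] using this

lemma geo_point {n : ℕ} {Ω : Set (EE n)} (hΩo : IsOpen Ω) {δ₀ : ℝ} {P ν : EE n → EE n}
    (hP : ∀ x ∈ Ω, infDist x (frontier Ω) < δ₀ → P x ∈ frontier Ω ∧ dist x (P x) = infDist x (frontier Ω) ∧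
      ∀ b ∈ frontier Ω, dist x b = infDist x (frontier Ω) → b = P x)
    (hν1 : ∀ b ∈ frontier Ω, ‖ν b‖ = 1 ∧
      ∀ s ∈ Ioo (0 : ℝ) δ₀, b + s • ν b ∈ Ω ∧ infDist (b + s • ν b) (frontier Ω) = s)
    (hν2 : ∀ x ∈ Ω, infDist x (frontier Ω) < δ₀ → ν x = ν (P x) ∧
      HasGradientAt (fun x => infDist x (frontier Ω)) (ν x) x)
    {x : EE n} (hx : x ∈ Ω) (hd : infDist x (frontier Ω) < δ₀) :
    x = P x + infDist x (frontier Ω) • ν (P x) := by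
  obtain ⟨p1, p2, p3⟩ := hP x hx hd
  obtain ⟨q1, q2⟩ := hν2 x hx hd
  rw [q1] at q2
  exact geo_proj p1 p2 (fdist_pos hΩo ⟨_, p1⟩ hx) (hν1 _ p1).1 q2

set_option maxHeartbeats 400000 in
lemma geo_main {n : ℕ} {Ω : Set (EE n)} (hΩo : IsOpen Ω) (hΩb : Bornology.IsBounded Ω) {δ₀ : ℝ}
    (hδ₀ : 0 < δ₀) {P ν : EE n → EE n}
    (hP : ∀ x ∈ Ω, infDist x (frontier Ω) < δ₀ → P x ∈ frontier Ω ∧ dist x (P x) = infDist x (frontier Ω) ∧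
      ∀ b ∈ frontier Ω, dist x b = infDist x (frontier Ω) → b = P x)
    (hν1 : ∀ b ∈ frontier Ω, ‖ν b‖ = 1 ∧
      ∀ s ∈ Ioo (0 : ℝ) δ₀, b + s • ν b ∈ Ω ∧ infDist (b + s • ν b) (frontier Ω) = s)
    (hν2 : ∀ x ∈ Ω, infDist x (frontier Ω) < δ₀ → ν x = ν (P x) ∧
      HasGradientAt (fun x => infDist x (frontier Ω)) (ν x) x) :
    ∀ η > 0, ∃ ρ > 0, ∀ b ∈ frontier Ω, ∀ z, ‖z - b‖ < ρ → η * ‖z - b‖ ≤ ⟪z - b, ν b⟫ →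
      0 < ⟪z - b, ν b⟫ → z ∈ Ω ∧ ⟪z - b, ν b⟫ / 2 ≤ infDist z (frontier Ω) ∧
        infDist z (frontier Ω) ≤ 2 * ⟪z - b, ν b⟫ := by
  intro η hη
  set r : ℝ := δ₀ / 2 with hr
  have hr0 : 0 < r := by positivity
  have hrm : r ∈ Ioo 0 δ₀ := ⟨hr0, by linarith⟩
  obtain ⟨ρ1, hρ1, hnu⟩ := geo_nu hΩb ν hr0
    (fun b hb => ⟨(hν1 b hb).1, subset_closure ((hν1 b hb).2 r hrm).1, ((hν1 b hb).2 r hrm).2⟩) (by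
      intro b hb e he h1 h2
      have h3 : b + r • e ∈ Ω := by
        by_contra h
        have h4 : b + r • e ∈ frontier Ω := by rw [frontier, hΩo.interior_eq]; exact ⟨h1, h⟩
        rw [infDist_zero_of_mem h4] at h2
        linarith
      have h4 : infDist (b + r • e) (frontier Ω) < δ₀ := by rw [h2]; exact hrm.2
      have h5 := geo_point hΩo hP hν1 hν2 h3 h4
      have h6 : b = P (b + r • e) := by
        apply (hP _ h3 h4).2.2 b hb
        rw [h2, dist_eq_norm, add_sub_cancel_left, norm_smul, he, mul_one, Real.norm_eq_abs, abs_of_pos hr0]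
      rw [h2, ← h6] at h5
      exact smul_right_injective _ hr0.ne' (add_left_cancel h5)) (η / 2) (half_pos hη)
  set ρ : ℝ := min (min (ρ1 / 2) (r * η)) (min (r * η / 4) δ₀) with hρ
  have hρ0 : 0 < ρ := by positivity
  have l1 : ρ ≤ ρ1 / 2 := (min_le_left _ _).trans (min_le_left _ _)
  have l2 : ρ ≤ r * η := (min_le_left _ _).trans (min_le_right _ _)
  have l3 : ρ ≤ r * η / 4 := (min_le_right _ _).trans (min_le_left _ _)
  have l4 : ρ ≤ δ₀ := (min_le_right _ _).trans (min_le_right _ _)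
  clear_value ρ
  refine ⟨ρ, hρ0, ?_⟩
  intro b hb z hz ha ha0
  obtain ⟨n1, n2⟩ := hν1 b hb
  set a : ℝ := ⟪z - b, ν b⟫ with haa
  set m : ℝ := ‖z - b‖ with hm
  have hm0 : 0 ≤ m := norm_nonneg _
  have e1 : m ^ 2 ≤ r * a := by
    have h1 : m * m ≤ m * (r * η) := mul_le_mul_of_nonneg_left (by linarith) hm0
    have h2 : r * (η * m) ≤ r * a := mul_le_mul_of_nonneg_left ha hr0.le
    nlinarith
  have hra : 0 < r * a := by positivity
  obtain ⟨g1, g2⟩ := geo_low hΩo hr0 n1 (n2 r hrm).1 (n2 r hrm).2 (z := z) (by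
    rw [← haa, ← hm]; linarith)
  rw [← haa, ← hm] at g2
  have e2 : m ^ 2 / (2 * r) ≤ a / 2 := by
    rw [div_le_iff₀ (by positivity)]; linarith
  refine ⟨g1, by linarith, ?_⟩
  have hdm : infDist z (frontier Ω) ≤ m := by
    rw [hm, ← dist_eq_norm]; exact infDist_le_dist_of_mem hb
  have hdlt : infDist z (frontier Ω) < δ₀ := by linarith
  obtain ⟨p1, p2, p3⟩ := hP z g1 hdlt
  have hz2 := geo_point hΩo hP hν1 hν2 g1 hdlt
  set y : EE n := P z with hy
  set d : ℝ := infDist z (frontier Ω) with hd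
  obtain ⟨k1, k2⟩ := hν1 y p1
  -- |b - y| ≤ 2 m
  have hby : ‖b - y‖ ≤ 2 * m := by
    have := dist_triangle b z y
    rw [dist_comm b z, dist_eq_norm, dist_eq_norm z b, p2] at this
    linarith
  have f1 : 2 * r * ⟪b - y, ν y⟫ ≤ ‖b - y‖ ^ 2 := by
    have h1 := infDist_le_dist_of_mem (x := y + r • ν y) hb
    rw [(k2 r hrm).2, dist_comm, dist_eq_norm] at h1
    have h2 : r ^ 2 ≤ ‖b - (y + r • ν y)‖ ^ 2 := pow_le_pow_left₀ hr0.le h1 2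
    rw [← sub_sub, norm_sub_sq_real, real_inner_smul_right, norm_smul, k1, Real.norm_eq_abs, mul_one, sq_abs] at h2
    linarith
  have f2 : ‖b - y‖ ^ 2 ≤ (2 * m) ^ 2 := pow_le_pow_left₀ (norm_nonneg _) hby 2
  have f3 : ⟪b - y, ν y⟫ ≤ η * m / 2 := by
    have h1 : m * m ≤ m * (r * η / 4) := mul_le_mul_of_nonneg_left (by linarith) hm0
    have h2 : r * ⟪b - y, ν y⟫ ≤ r * (η * m / 2) := by nlinarith
    exact le_of_mul_le_mul_left h2 hr0
  have f4 : d = ⟪z - b, ν y⟫ + ⟪b - y, ν y⟫ := by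
    rw [← inner_add_left, sub_add_sub_cancel]
    have : z - y = d • ν y := by nth_rewrite 1 [hz2]; abel
    rw [this, real_inner_smul_left, real_inner_self_eq_norm_sq, k1]; ring
  have f5 : ⟪z - b, ν y⟫ ≤ a + m * (η / 2) := by
    have h1 : ⟪z - b, ν y⟫ = a + ⟪z - b, ν y - ν b⟫ := by rw [inner_sub_right]; ring
    have h2 := real_inner_le_norm (z - b) (ν y - ν b)
    have h3 := hnu y p1 b hb (by rw [norm_sub_rev]; linarith)
    have h4 : ‖z - b‖ * ‖ν y - ν b‖ ≤ m * (η / 2) := by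
      apply mul_le_mul_of_nonneg_left h3.le hm0
    linarith
  linarith

set_option maxHeartbeats 400000 in
lemma scale_est {n : ℕ} {p β : ℝ} (hp : 2 < p) (hβ : β = 1 / (p - 1)) {Ω : Set (EE n)} {C₀ M : ℝ} (hC₀ : 0 < C₀)
    (hM0 : 0 ≤ M) (ν : EE n → EE n) (hν1 : ∀ b ∈ frontier Ω, ‖ν b‖ = 1)
    (hgeo : ∀ η > 0, ∃ ρ > 0, ∀ b ∈ frontier Ω, ∀ z, ‖z - b‖ < ρ → η * ‖z - b‖ ≤ ⟪z - b, ν b⟫ →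
      0 < ⟪z - b, ν b⟫ → z ∈ Ω ∧ ⟪z - b, ν b⟫ / 2 ≤ infDist z (frontier Ω) ∧
        infDist z (frontier Ω) ≤ 2 * ⟪z - b, ν b⟫) {ε : ℝ} (hε : 0 < ε) :
    ∃ l0 > 0, ∀ (v : EE n → ℝ) (g : EE n → EE n) (h : EE n → (EE n →L[ℝ] EE n)),
      (∀ x ∈ Ω, HasGradientAt v (g x) x) → (∀ x ∈ Ω, HasFDerivAt g (h x) x) →
      (∀ x ∈ Ω, |lapl (h x) + ‖g x‖ ^ p| ≤ M) →
      (∀ x ∈ Ω, ‖g x‖ ≤ C₀ * ((infDist x (frontier Ω)) ^ (-β) + 1)) →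
      (∀ x ∈ Ω, |v x| ≤ C₀ / (1 - β) * (infDist x (frontier Ω)) ^ (1 - β) + C₀ * infDist x (frontier Ω)) →
      ∀ b ∈ frontier Ω, ∀ l, 0 < l → l < l0 → l ^ β * ‖g (b + l • ν b)‖ ≤ (1 + ε) * β ^ β := by
  have hβ0 : 0 < β := by rw [hβ]; apply one_div_pos.2; linarith
  have hβ1 : β < 1 := by rw [hβ, div_lt_one] <;> linarith
  have hβp : β * (p - 1) = 1 := by rw [hβ]; field_simp [show p - 1 ≠ 0 by linarith]
  have h1β : 0 < 1 - β := by linarith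
  set C1 : ℝ := C₀ / (1 - β) + C₀ with hC1
  have hC10 : 0 < C1 := by positivity
  set A : ℝ := 4 * C₀ + 2 * C1 with hA
  have hA0 : 0 < A := by positivity
  obtain ⟨κ', hκ', hE⟩ := thmE (n := n) hp hβ hA0 hε
  set κ : ℝ := min κ' 1 with hκ
  have hκ0 : 0 < κ := by positivity
  have hκ1 : κ ≤ 1 := min_le_right _ _
  have hκκ : κ ≤ κ' := min_le_left _ _
  clear_value κ
  obtain ⟨ρ, hρ0, hg5⟩ := hgeo (κ ^ 2) (by positivity)
  set l0 : ℝ := min (min (ρ * κ) (κ / 2)) (κ / (M + 1)) with hl0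
  have hl00 : 0 < l0 := by positivity
  refine ⟨l0, hl00, ?_⟩
  intro v g h hv hg heq hgb hvb b hb l hl hll
  have m1 : l < ρ * κ := lt_of_lt_of_le hll ((min_le_left _ _).trans (min_le_left _ _))
  have m2 : l < κ / 2 := lt_of_lt_of_le hll ((min_le_left _ _).trans (min_le_right _ _))
  have m3 : l < κ / (M + 1) := lt_of_lt_of_le hll (min_le_right _ _)
  clear_value l0
  have m4 : l ≤ 1 := by linarith
  have hnb := hν1 b hb
  have hloc : ∀ z : EE n, ‖z‖ < 1 / κ → κ < ⟪z, ν b⟫ → b + l • z ∈ Ω ∧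
      l * ⟪z, ν b⟫ / 2 ≤ infDist (b + l • z) (frontier Ω) ∧
      infDist (b + l • z) (frontier Ω) ≤ 2 * (l * ⟪z, ν b⟫) ∧ infDist (b + l • z) (frontier Ω) ≤ 1 := by
    intro z h1 h2
    have e0 : b + l • z - b = l • z := by abel
    have e1 : ‖l • z‖ = l * ‖z‖ := by rw [norm_smul, Real.norm_eq_abs, abs_of_pos hl]
    have e2 : ⟪l • z, ν b⟫ = l * ⟪z, ν b⟫ := real_inner_smul_left _ _ _
    have e3 : ‖z‖ * κ < 1 := by rwa [lt_div_iff₀ hκ0] at h1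
    have e4 : ⟪z, ν b⟫ ≤ ‖z‖ := by
      have := real_inner_le_norm z (ν b)
      rwa [hnb, mul_one] at this
    have := hg5 b hb (b + l • z) (by
      rw [e0, e1]
      calc l * ‖z‖ ≤ ρ * κ * ‖z‖ := by gcongr
        _ = ρ * (‖z‖ * κ) := by ring
        _ < ρ * 1 := by gcongr
        _ = ρ := mul_one _) (by
      rw [e0, e1, e2]
      calc κ ^ 2 * (l * ‖z‖) = (κ * l) * (‖z‖ * κ) := by ring
        _ ≤ (κ * l) * 1 := by gcongr
        _ = l * κ := by ring
        _ ≤ l * ⟪z, ν b⟫ := by gcongr) (by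
      rw [e0, e2]
      apply mul_pos hl; linarith)
    rw [e0, e2] at this
    refine ⟨this.1, this.2.1, this.2.2, this.2.2.trans ?_⟩
    calc 2 * (l * ⟪z, ν b⟫) ≤ 2 * (κ / 2 * ‖z‖) := by gcongr; linarith
      _ = ‖z‖ * κ := by ring
      _ ≤ 1 := e3.le
  have hl' : ∀ z : EE n, HasFDerivAt (fun z : EE n => b + l • z) (l • ContinuousLinearMap.id ℝ (EE n)) z := by
    intro z
    exact ((hasFDerivAt_id z).const_smul l).const_add b
  have hll1 : l ^ (β - 1) * l = l ^ β := by
    nth_rewrite 2 [← Real.rpow_one l]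
    rw [← Real.rpow_add hl]; congr 1; ring
  have hll2 : l ^ β * l = l ^ (1 + β) := by
    nth_rewrite 2 [← Real.rpow_one l]
    rw [← Real.rpow_add hl]; congr 1; ring
  have hS : Sol p β A κ (ν b) (fun z => l ^ (β - 1) * v (b + l • z)) (fun z => l ^ β • g (b + l • z))
      (fun z => l ^ (1 + β) • h (b + l • z)) := by
    refine ⟨hnb, ?_, ?_, ?_, ?_, ?_⟩
    · intro z h1 h2
      obtain ⟨q1, q2, q3, q4⟩ := hloc z h1 h2
      have := ((hasGradientAt_iff_hasFDerivAt.1 (hv _ q1)).comp z (hl' z)).const_mul (l ^ (β - 1))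
      rw [hasGradientAt_iff_hasFDerivAt]
      refine this.congr_fderiv ?_
      ext w
      simp [← hll1]
      ring
    · intro z h1 h2
      obtain ⟨q1, q2, q3, q4⟩ := hloc z h1 h2
      have := ((hg _ q1).comp z (hl' z)).const_smul (l ^ β)
      refine this.congr_fderiv ?_
      ext w
      simp [← hll2]
      ring
    · intro z h1 h2
      obtain ⟨q1, q2, q3, q4⟩ := hloc z h1 h2
      have e1 : lapl (l ^ (1 + β) • h (b + l • z)) + ‖l ^ β • g (b + l • z)‖ ^ p
          = l ^ (1 + β) * (lapl (h (b + l • z)) + ‖g (b + l • z)‖ ^ p) := by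
        rw [lapl_smul, norm_smul, Real.mul_rpow (norm_nonneg _) (norm_nonneg _), Real.norm_eq_abs,
          abs_of_pos (by positivity), ← Real.rpow_mul hl.le, show β * p = 1 + β by linarith]
        ring
      have e2 : l ^ (1 + β) ≤ l := by
        have := Real.rpow_le_rpow_of_exponent_ge hl m4 (show 1 ≤ 1 + β by linarith)
        rwa [Real.rpow_one] at this
      rw [e1, abs_mul, abs_of_pos (by positivity)]
      calc l ^ (1 + β) * |lapl (h (b + l • z)) + ‖g (b + l • z)‖ ^ p| ≤ l * M := by
            gcongr; exact heq _ q1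
        _ ≤ κ / (M + 1) * (M + 1) := by gcongr; linarith
        _ = κ := by field_simp
    · intro z h1 h2
      obtain ⟨q1, q2, q3, q4⟩ := hloc z h1 h2
      have ha : 0 < ⟪z, ν b⟫ := by linarith
      have hD0 : 0 < infDist (b + l • z) (frontier Ω) := lt_of_lt_of_le (by positivity) q2
      have e1 := hgb _ q1
      have e2 : 1 ≤ (infDist (b + l • z) (frontier Ω)) ^ (-β) :=
        Real.one_le_rpow_of_pos_of_le_one_of_nonpos hD0 q4 (by linarith)
      have e3 : (infDist (b + l • z) (frontier Ω)) ^ (-β) ≤ (l * ⟪z, ν b⟫ / 2) ^ (-β) :=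
        Real.rpow_le_rpow_of_nonpos (by positivity) q2 (by linarith)
      have e4 : (l * ⟪z, ν b⟫ / 2) ^ (-β) = (l ^ β)⁻¹ * ⟪z, ν b⟫ ^ (-β) * 2 ^ β := by
        rw [Real.div_rpow (by positivity) (by norm_num), Real.mul_rpow hl.le ha.le, Real.rpow_neg hl.le,
          Real.rpow_neg (show (0:ℝ) ≤ 2 by norm_num), div_inv_eq_mul]
      have e5 : (2:ℝ) ^ β ≤ 2 := by
        have := Real.rpow_le_rpow_of_exponent_le (show (1:ℝ) ≤ 2 by norm_num) hβ1.le
        rwa [Real.rpow_one] at this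
      have hlβ : 0 < l ^ β := by positivity
      rw [norm_smul, Real.norm_eq_abs, abs_of_pos hlβ]
      calc l ^ β * ‖g (b + l • z)‖ ≤ l ^ β * (C₀ * ((infDist (b + l • z) (frontier Ω)) ^ (-β) + 1)) := by gcongr
        _ ≤ l ^ β * (C₀ * (2 * (l * ⟪z, ν b⟫ / 2) ^ (-β))) := by
            gcongr; linarith
        _ = 2 * C₀ * ⟪z, ν b⟫ ^ (-β) * 2 ^ β := by rw [e4]; field_simp
        _ ≤ 2 * C₀ * ⟪z, ν b⟫ ^ (-β) * 2 := by gcongr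
        _ = 4 * C₀ * ⟪z, ν b⟫ ^ (-β) := by ring
        _ ≤ A * ⟪z, ν b⟫ ^ (-β) := by
            apply mul_le_mul_of_nonneg_right _ (by positivity)
            linarith
    · intro z h1 h2
      obtain ⟨q1, q2, q3, q4⟩ := hloc z h1 h2
      have ha : 0 < ⟪z, ν b⟫ := by linarith
      have hD0 : 0 < infDist (b + l • z) (frontier Ω) := lt_of_lt_of_le (by positivity) q2
      have e1 := hvb _ q1
      set D : ℝ := infDist (b + l • z) (frontier Ω) with hD
      have e2 : D ≤ D ^ (1 - β) := by
        have := Real.rpow_le_rpow_of_exponent_ge hD0 q4 (show 1 - β ≤ 1 by linarith)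
        rwa [Real.rpow_one] at this
      have e3 : D ^ (1 - β) ≤ (2 * (l * ⟪z, ν b⟫)) ^ (1 - β) := Real.rpow_le_rpow hD0.le q3 h1β.le
      have e4 : (2 * (l * ⟪z, ν b⟫)) ^ (1 - β) = 2 ^ (1 - β) * (l ^ (1 - β) * ⟪z, ν b⟫ ^ (1 - β)) := by
        rw [Real.mul_rpow (by norm_num) (by positivity), Real.mul_rpow hl.le ha.le]
      have e5 : (2:ℝ) ^ (1 - β) ≤ 2 := by
        have := Real.rpow_le_rpow_of_exponent_le (show (1:ℝ) ≤ 2 by norm_num) (show 1 - β ≤ 1 by linarith)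
        rwa [Real.rpow_one] at this
      have e6 : l ^ (β - 1) * l ^ (1 - β) = 1 := by
        rw [← Real.rpow_add hl]; simp
      have e7 : |v (b + l • z)| ≤ C1 * D ^ (1 - β) := by
        have : C₀ * D ≤ C₀ * D ^ (1 - β) := by gcongr
        rw [hC1, add_mul]; linarith
      rw [abs_mul, abs_of_pos (show 0 < l ^ (β - 1) by positivity)]
      calc l ^ (β - 1) * |v (b + l • z)| ≤ l ^ (β - 1) * (C1 * (2 * (l * ⟪z, ν b⟫)) ^ (1 - β)) := by
            gcongr
            exact e7.trans (by gcongr)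
        _ = (l ^ (β - 1) * l ^ (1 - β)) * (C1 * ⟪z, ν b⟫ ^ (1 - β) * 2 ^ (1 - β)) := by rw [e4]; ring
        _ = C1 * ⟪z, ν b⟫ ^ (1 - β) * 2 ^ (1 - β) := by rw [e6, one_mul]
        _ ≤ C1 * ⟪z, ν b⟫ ^ (1 - β) * 2 := by gcongr
        _ = 2 * C1 * ⟪z, ν b⟫ ^ (1 - β) := by ring
        _ ≤ A * ⟪z, ν b⟫ ^ (1 - β) := by
            apply mul_le_mul_of_nonneg_right _ (by positivity)
            linarith
  have := hE _ _ _ _ (hS.mono hκ0 hκκ)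
  rwa [norm_smul, Real.norm_eq_abs, abs_of_pos (by positivity)] at this

theorem stmt3 {n : ℕ} (hn : 1 ≤ n)
    -- the exponents and constants
    (p β cp dp : ℝ) (hp : 2 < p) (hβ : β = 1 / (p - 1))
    (hcp : cp = β ^ β / (1 - β)) (hdp : dp = β ^ β)
    -- the bounded domain Ω with C² boundary
    (Ω : Set (EuclideanSpace ℝ (Fin n))) (hΩo : IsOpen Ω) (hΩb : Bornology.IsBounded Ω) (hΩc2 : IsC2Boundary Ω)
    -- the distance to the boundary
    (δ : EuclideanSpace ℝ (Fin n) → ℝ) (hδ : ∀ x, δ x = infDist x (frontier Ω))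
    -- δ₀ and the boundary neighborhood Ωδ = {x ∈ Ω : δ(x) < δ₀}
    (δ₀ : ℝ) (hδ₀ : 0 < δ₀)
    (Ωδ : Set (EuclideanSpace ℝ (Fin n))) (hΩδ : Ωδ = {x ∈ Ω | δ x < δ₀})
    -- δ is C² on Ωδ
    (hδC2 : ContDiffOn ℝ 2 δ Ωδ)
    -- every x ∈ Ωδ has a unique nearest boundary point P x
    (P : EuclideanSpace ℝ (Fin n) → EuclideanSpace ℝ (Fin n))
    (hP : ∀ x ∈ Ωδ, P x ∈ frontier Ω ∧ dist x (P x) = δ x ∧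
      ∀ b ∈ frontier Ω, dist x b = δ x → b = P x)
    -- interior sphere condition of radius δ₀ at every boundary point
    (hsph : ∀ b ∈ frontier Ω, ∃ y, ball y δ₀ ⊆ Ω ∧ dist y b = δ₀)
    -- the inward unit normal field ν
    (ν : EuclideanSpace ℝ (Fin n) → EuclideanSpace ℝ (Fin n))
    (hν1 : ∀ b ∈ frontier Ω, ‖ν b‖ = 1 ∧
      ∀ s ∈ Ioo (0 : ℝ) δ₀, b + s • ν b ∈ Ω ∧ δ (b + s • ν b) = s)
    (hν2 : ∀ x ∈ Ωδ, ν x = ν (P x) ∧ HasGradientAt δ (ν x) x)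
    -- the solution u on [0,T], with spatial gradient G, spatial Hessian H and
    -- time derivative
    (T : ℝ) (hT : 0 < T)
    (u : EuclideanSpace ℝ (Fin n) → ℝ → ℝ)
    (G : EuclideanSpace ℝ (Fin n) → ℝ → EuclideanSpace ℝ (Fin n))
    (H : EuclideanSpace ℝ (Fin n) → ℝ → (EuclideanSpace ℝ (Fin n) →L[ℝ] EuclideanSpace ℝ (Fin n)))
    (u' : EuclideanSpace ℝ (Fin n) → ℝ → ℝ)
    -- u is continuous on Ω̄ × [0,T] and vanishes on ∂Ω × [0,T]
    (hu_cont : ContinuousOn (fun q : EuclideanSpace ℝ (Fin n) × ℝ => u q.1 q.2) (closure Ω ×ˢ Icc 0 T))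
    (hu_bd : ∀ b ∈ frontier Ω, ∀ t ∈ Icc (0 : ℝ) T, u b t = 0)
    -- u is continuously differentiable in x on Ω̄ × [0,T), with spatial gradient G
    (hG : ∀ t ∈ Ico (0 : ℝ) T, ∀ x ∈ closure Ω,
      HasGradientWithinAt (fun y => u y t) (G x t) (closure Ω) x)
    (hG_cont : ContinuousOn (fun q : EuclideanSpace ℝ (Fin n) × ℝ => G q.1 q.2) (closure Ω ×ˢ Ico 0 T))
    -- on Ω × (0,T], u has spatial gradient G, spatial Hessian H and time derivative,
    -- all continuous there
    (hG2 : ∀ t ∈ Ioc (0 : ℝ) T, ∀ x ∈ Ω, HasGradientAt (fun y => u y t) (G x t) x)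
    (hH : ∀ t ∈ Ioc (0 : ℝ) T, ∀ x ∈ Ω, HasFDerivAt (fun y => G y t) (H x t) x)
    (hu' : ∀ t ∈ Ioc (0 : ℝ) T, ∀ x ∈ Ω, HasDerivAt (fun s => u x s) (u' x t) t)
    (hreg : ContinuousOn (fun q : EuclideanSpace ℝ (Fin n) × ℝ =>
      (u q.1 q.2, G q.1 q.2, H q.1 q.2, u' q.1 q.2)) (Ω ×ˢ Ioc 0 T))
    -- the PDE uₜ - Δu = |∇u|^p on Ω × (0,T]
    (hPDE : ∀ t ∈ Ioc (0 : ℝ) T, ∀ x ∈ Ω,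
      u' x t - ∑ i : Fin n, ⟪H x t (EuclideanSpace.single i (1 : ℝ)),
        EuclideanSpace.single i (1 : ℝ)⟫ = ‖G x t‖ ^ p)
    -- a priori bounds: |uₜ| ≤ M on Ω × [T/2,T] and the Bernstein estimate
    (M : ℝ) (hM : ∀ x ∈ Ω, ∀ t ∈ Icc (T / 2) T, |u' x t| ≤ M)
    (C₀ : ℝ) (hC₀ : ∀ x ∈ Ω, ∀ t ∈ Ico (0 : ℝ) T, ‖G x t‖ ≤ C₀ * ((δ x) ^ (-β) + 1))
    :
    ∀ ε > 0, ∃ C > 0, ∀ x ∈ Ω, ∀ t ∈ Icc (0 : ℝ) T,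
      ‖G x t‖ ≤ (1 + ε) * dp * (δ x) ^ (-β) + C ∧
      u x t ≤ (1 + ε) * cp * (δ x) ^ (1 - β) + C * δ x := by
  intro ε hε
  have hβ0 : 0 < β := by rw [hβ]; apply one_div_pos.2; linarith
  have hβ1 : β < 1 := by rw [hβ, div_lt_one] <;> linarith
  have hδeq : δ = fun x => infDist x (frontier Ω) := funext hδ
  subst hδeq
  subst hΩδ
  simp only at *
  rcases Ω.eq_empty_or_nonempty with h0 | ⟨x0, hx0⟩
  · refine ⟨1, one_pos, ?_⟩
    intro x hx
    rw [h0] at hx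
    exact absurd hx (notMem_empty x)
  have hne : (frontier Ω).Nonempty := frontier_ne hn hΩb hx0
  set C1 : ℝ := |C₀| + 1 with hC1
  have hC10 : 0 < C1 := by positivity
  have hDpos : ∀ x ∈ Ω, 0 < infDist x (frontier Ω) := fun x hx => fdist_pos hΩo hne hx
  have hgb : ∀ x ∈ Ω, ∀ t ∈ Ico (0 : ℝ) T, ‖G x t‖ ≤ C1 * ((infDist x (frontier Ω)) ^ (-β) + 1) := by
    intro x hx t ht
    refine (hC₀ x hx t ht).trans ?_
    have h1 : 0 ≤ (infDist x (frontier Ω)) ^ (-β) + 1 := by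
      have := Real.rpow_nonneg (hDpos x hx).le (-β); linarith
    apply mul_le_mul_of_nonneg_right _ h1
    have := le_abs_self C₀
    linarith
  have hvc : ∀ t ∈ Ico (0 : ℝ) T, ContinuousOn (fun x => u x t) (closure Ω) := by
    intro t ht
    exact hu_cont.comp (f := fun x : EuclideanSpace ℝ (Fin n) => (x, t)) (by fun_prop)
      (fun x hx => ⟨hx, ht.1, ht.2.le⟩)
  have hgr : ∀ t ∈ Ico (0 : ℝ) T, ∀ x ∈ Ω, HasGradientAt (fun y => u y t) (G x t) x := by
    intro t ht x hx
    have h1 := hG t ht x (subset_closure hx)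
    rw [hasGradientWithinAt_iff_hasFDerivWithinAt] at h1
    rw [hasGradientAt_iff_hasFDerivAt]
    exact h1.hasFDerivAt (mem_of_superset (hΩo.mem_nhds hx) subset_closure)
  have hseg : ∀ A C : ℝ, ∀ t ∈ Ico (0 : ℝ) T,
      (∀ x ∈ Ω, ‖G x t‖ ≤ A * (infDist x (frontier Ω)) ^ (-β) + C) → ∀ x ∈ Ω,
      |u x t| ≤ A / (1 - β) * (infDist x (frontier Ω)) ^ (1 - β) + C * infDist x (frontier Ω) := by
    intro A C t ht hb x hx
    exact seg_u hΩo hne hβ1 (hvc t ht) (fun b hb => hu_bd b hb t ⟨ht.1, ht.2.le⟩) (hgr t ht) hb hx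
  have hP' : ∀ x ∈ Ω, infDist x (frontier Ω) < δ₀ → P x ∈ frontier Ω ∧ dist x (P x) = infDist x (frontier Ω) ∧
      ∀ b ∈ frontier Ω, dist x b = infDist x (frontier Ω) → b = P x := fun x hx hd => hP x ⟨hx, hd⟩
  have hν2' : ∀ x ∈ Ω, infDist x (frontier Ω) < δ₀ → ν x = ν (P x) ∧
      HasGradientAt (fun x => infDist x (frontier Ω)) (ν x) x := fun x hx hd => hν2 x ⟨hx, hd⟩
  obtain ⟨l0, hl0, hscale⟩ := scale_est hp hβ hC10 (abs_nonneg M) ν (fun b hb => (hν1 b hb).1)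
    (geo_main hΩo hΩb hδ₀ hP' hν1 hν2') hε
  set l1 : ℝ := min l0 δ₀ with hl1
  have hl10 : 0 < l1 := lt_min hl0 hδ₀
  obtain ⟨C2, hC2⟩ := (hΩb.isCompact_closure.prod (isCompact_Icc (a := (0:ℝ)) (b := T / 2))).exists_bound_of_continuousOn
    (f := fun q : EuclideanSpace ℝ (Fin n) × ℝ => G q.1 q.2)
    (hG_cont.mono (prod_mono subset_rfl (fun t ht => ⟨ht.1, by linarith [ht.2]⟩)))
  have hr0 : 0 ≤ l1 ^ (-β) := Real.rpow_nonneg hl10.le _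
  set C : ℝ := |C2| + C1 * (l1 ^ (-β) + 1) with hC
  have hC0 : 0 < C := by positivity
  have hCa : C2 ≤ C := by
    have h1 := le_abs_self C2
    have h2 : 0 ≤ C1 * (l1 ^ (-β) + 1) := by positivity
    linarith
  have hCb : C1 * (l1 ^ (-β) + 1) ≤ C := by
    have h1 := abs_nonneg C2
    linarith
  have hd0 : 0 < β ^ β := Real.rpow_pos_of_pos hβ0 _
  have claim1 : ∀ x ∈ Ω, ∀ t ∈ Ico (0 : ℝ) T,
      ‖G x t‖ ≤ (1 + ε) * dp * (infDist x (frontier Ω)) ^ (-β) + C := by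
    intro x hx t ht
    have hD := hDpos x hx
    rw [hdp]
    have hnn : 0 ≤ (1 + ε) * β ^ β * (infDist x (frontier Ω)) ^ (-β) := by positivity
    rcases le_total t (T / 2) with h | h
    · have := hC2 (x, t) ⟨subset_closure hx, ht.1, h⟩
      simp only at this
      linarith
    · have ht2 : t ∈ Ioc 0 T := ⟨by linarith, ht.2.le⟩
      rcases lt_or_ge (infDist x (frontier Ω)) l1 with hl | hl
      · have hlδ : infDist x (frontier Ω) < δ₀ := lt_of_lt_of_le hl (min_le_right _ _)
        have hll : infDist x (frontier Ω) < l0 := lt_of_lt_of_le hl (min_le_left _ _)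
        have hxp := geo_point hΩo hP' hν1 hν2' hx hlδ
        have := hscale (fun y => u y t) (fun y => G y t) (fun y => H y t) (hgr t ht) (hH t ht2) (by
            intro y hy
            have h1 := hPDE t ht2 y hy
            have h2 : lapl (H y t) + ‖G y t‖ ^ p = u' y t := by
              rw [lapl, ← h1]; ring
            rw [h2]
            exact (hM y hy t ⟨h, ht.2.le⟩).trans (le_abs_self M)) (fun y hy => hgb y hy t ht)
          (hseg C1 C1 t ht (fun y hy => by have := hgb y hy t ht; linarith)) (P x) (hP' x hx hlδ).1
          (infDist x (frontier Ω)) hD hll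
        rw [← hxp] at this
        have hDβ : 0 < (infDist x (frontier Ω)) ^ β := by positivity
        have h3 : ‖G x t‖ ≤ (1 + ε) * β ^ β * (infDist x (frontier Ω)) ^ (-β) := by
          rw [Real.rpow_neg hD.le, ← div_eq_mul_inv, le_div_iff₀ hDβ, mul_comm]
          exact this
        linarith
      · have h1 := hgb x hx t ht
        have h2 : (infDist x (frontier Ω)) ^ (-β) ≤ l1 ^ (-β) :=
          Real.rpow_le_rpow_of_nonpos hl10 hl (by linarith)
        have h3 : C1 * ((infDist x (frontier Ω)) ^ (-β) + 1) ≤ C1 * (l1 ^ (-β) + 1) := by gcongr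
        linarith
  have claim2 : ∀ x ∈ Ω, ∀ t ∈ Ico (0 : ℝ) T,
      u x t ≤ (1 + ε) * cp * (infDist x (frontier Ω)) ^ (1 - β) + C * infDist x (frontier Ω) := by
    intro x hx t ht
    have h1 := hseg ((1 + ε) * dp) C t ht (fun y hy => claim1 y hy t ht) x hx
    have h2 : (1 + ε) * cp = (1 + ε) * dp / (1 - β) := by rw [hcp, hdp]; ring
    rw [h2]
    exact (le_abs_self _).trans h1
  refine ⟨C, hC0, ?_⟩
  intro x hx t ht
  rcases ht.2.lt_or_eq with h | h
  · exact ⟨claim1 x hx t ⟨ht.1, h⟩, claim2 x hx t ⟨ht.1, h⟩⟩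
  · subst h
    have hcont : ContinuousOn (fun s : ℝ => (u x s, G x s, H x s, u' x s)) (Ioc 0 t) :=
      hreg.comp (f := fun s : ℝ => (x, s)) (by fun_prop) (fun s hs => ⟨hx, hs⟩)
    have hct := (hcont t ⟨hT, le_rfl⟩).mono (show Ioo 0 t ⊆ Ioc 0 t from Ioo_subset_Ioc_self)
    have hfil : nhdsWithin t (Ioo 0 t) = nhdsWithin t (Iio t) := nhdsWithin_Ioo_eq_nhdsLT hT
    have hnb : (nhdsWithin t (Ioo 0 t)).NeBot := by rw [hfil]; infer_instance
    have hu1 : Tendsto (fun s => u x s) (nhdsWithin t (Ioo 0 t)) (nhds (u x t)) :=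
      (continuous_fst.tendsto _).comp hct.tendsto
    have hG1 : Tendsto (fun s => ‖G x s‖) (nhdsWithin t (Ioo 0 t)) (nhds ‖G x t‖) :=
      ((continuous_norm.comp (continuous_fst.comp continuous_snd)).tendsto _).comp hct.tendsto
    constructor
    · apply le_of_tendsto hG1
      filter_upwards [self_mem_nhdsWithin] with s hs
      exact claim1 x hx s ⟨hs.1.le, hs.2⟩
    · apply le_of_tendsto hu1
      filter_upwards [self_mem_nhdsWithin] with s hs
      exact claim2 x hx s ⟨hs.1.le, hs.2⟩
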